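/- arXiv:1902.01594 — 3 statements merged into one kernel-verified Lean document; each statement's English description precedes it below -/
import Mathlib

section
/- Let (X,d) be a complete, locally compact geodesic metric space with locally extendable geodesics which is Busemann nonpositively curved, i.e., for any two minimizing geodesics γ₁, γ₂ : [0,1] → X parametrized proportionally to arc length with γ₁(0) = γ₂(0), one has d(γ₁(t), γ₂(t)) ≤ t·d(γ₁(1), γ₂(1)) for all t ∈ [0,1]. Then for every 0 < ε < π/2, X is semi-globally ATB(ε). -/
/-- A minimizing geodesic in a metric space, parametrized by arc length on `[0, len]`. -/
structure MinGeodesic (X : Type*) [MetricSpace X] where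
  len : ℝ
  len_nonneg : 0 ≤ len
  toFun : ℝ → X
  isom : ∀ s ∈ Set.Icc (0 : ℝ) len, ∀ t ∈ Set.Icc (0 : ℝ) len,
    dist (toFun s) (toFun t) = |s - t|

/-- The image (trace) of a minimizing geodesic. -/
def MinGeodesic.image {X : Type*} [MetricSpace X] (γ : MinGeodesic X) : Set X :=
  γ.toFun '' Set.Icc 0 γ.len

/-- The Euclidean comparison angle `∠̃ x p y`. -/
noncomputable def compAngle {X : Type*} [MetricSpace X] (p x y : X) : ℝ :=
  Real.arccos ((dist x p ^ 2 + dist y p ^ 2 - dist x y ^ 2) / (2 * dist x p * dist y p))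

/-- The point `p` satisfies the `ATB(ε)` condition with constants `L` and `R`. -/
def ATBPoint {X : Type*} [MetricSpace X] (ε : ℝ) (p : X) (L : ℕ) (R : ℝ) : Prop :=
  ∀ y : Fin L → X, (∀ i, y i ∈ Metric.ball p R ∧ y i ≠ p) →
    ∃ i j, i ≠ j ∧ compAngle p (y i) (y j) < ε

/-- A map `ξ : [0,1] → X` is a minimizing geodesic parametrized proportionally
to arc length. -/
def IsPropGeodesic {X : Type*} [MetricSpace X] (ξ : ℝ → X) : Prop :=
  ∀ s ∈ Set.Icc (0 : ℝ) 1, ∀ t ∈ Set.Icc (0 : ℝ) 1,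
    dist (ξ s) (ξ t) = |s - t| * dist (ξ 0) (ξ 1)

/-!
The Busemann condition contracts geodesics issuing from `p` linearly.  Hence, if geodesics from `p`
through `y₁` and `y₂` reach the sphere of radius `R` about `p` at `z₁` and `z₂`, then
`d(y₁, y₂) ≤ |d(p, y₁) - d(p, y₂)| + d(p, y₁) · d(z₁, z₂) / R`, so the comparison angle of `y₁` and
`y₂` at `p` is at most `arccos (1 - d(z₁, z₂) / R)`, however close the `yᵢ` are to `p`.  A compact
ball contains only boundedly many uniformly separated points `zᵢ`, so among many points `yᵢ` two
have a small comparison angle.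

That geodesics can be prolonged to the sphere follows from local extendability: distance functions
are convex along geodesics, so a curve that is minimizing on two overlapping pieces is minimizing,
and in a proper space (Hopf–Rinow) local prolongations continue up to any prescribed length.
-/

open Set Metric

section PseudoMetricSpaces

variable {X : Type*} [PseudoMetricSpace X]

/-- The point `y` lies metrically between `x` and `z`.  In a geodesic space this says that some
minimizing geodesic from `x` to `z` passes through `y`; the metric form is a closed condition. -/
def MetricBtw (x y z : X) : Prop :=
  dist x y + dist y z = dist x z

theorem MetricBtw.trans {p y z w : X} (h : MetricBtw p y z) (h' : MetricBtw p z w) :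
    MetricBtw p y w := by
  unfold MetricBtw at *
  linarith [dist_triangle p y w, dist_triangle y z w]

theorem isClosed_setOfPred_metricBtw (x y : X) : IsClosed {z | MetricBtw x y z} :=
  isClosed_eq (by fun_prop) (by fun_prop)

theorem exists_card_forall_exists_dist_lt {s : Set X} (hs : TotallyBounded s) {δ : ℝ}
    (hδ : 0 < δ) :
    ∃ L : ℕ, ∀ z : Fin L → X, (∀ i, z i ∈ s) → ∃ i j, i ≠ j ∧ dist (z i) (z j) < δ := by
  obtain ⟨t, ht, hcover⟩ := totallyBounded_iff.1 hs (δ / 2) (half_pos hδ)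
  refine ⟨ht.toFinset.card + 1, fun z hz => ?_⟩
  choose q hqt hzq using fun i => mem_iUnion₂.1 (hcover (hz i))
  obtain ⟨i, -, j, -, hij, hq⟩ := Finset.exists_ne_map_eq_of_card_lt_of_maps_to
    (s := Finset.univ) (t := ht.toFinset) (f := q) (by simp) fun i _ => by simpa using hqt i
  have hi : dist (z i) (q j) < δ / 2 := hq ▸ hzq i
  have hj : dist (z j) (q j) < δ / 2 := hzq j
  exact ⟨i, j, hij, by linarith [dist_triangle_right (z i) (z j) (q j)]⟩

end PseudoMetricSpaces

section BusemannSpaces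

variable (X : Type*) [MetricSpace X]

/-- Any two points are joined by a minimizing geodesic. -/
def IsGeodesicSpace : Prop :=
  ∀ x y : X, ∃ γ : MinGeodesic X, γ.toFun 0 = x ∧ γ.toFun γ.len = y

/-- Every point `p` has a `δ > 0` such that minimizing geodesics inside the closed `δ`-ball about
`p` can be prolonged by `δ` as minimizing geodesics. -/
def HasLocallyExtendableGeodesics : Prop :=
  ∀ p : X, ∃ δ : ℝ, 0 < δ ∧
    ∀ γ : MinGeodesic X, γ.image ⊆ closedBall p δ →
      ∃ γ' : MinGeodesic X, γ'.len = γ.len + δ ∧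
        ∀ t ∈ Icc (0 : ℝ) γ.len, γ'.toFun t = γ.toFun t

/-- Busemann nonpositive curvature, in the form of the comparison of two geodesics with a common
starting point. -/
def IsBusemannNPC : Prop :=
  ∀ γ₁ γ₂ : ℝ → X, IsPropGeodesic γ₁ → IsPropGeodesic γ₂ → γ₁ 0 = γ₂ 0 →
    ∀ t ∈ Icc (0 : ℝ) 1, dist (γ₁ t) (γ₂ t) ≤ t * dist (γ₁ 1) (γ₂ 1)

variable {X}

namespace MinGeodesic

theorem dist_eq_sub (γ : MinGeodesic X) {s t : ℝ} (hs : 0 ≤ s) (hst : s ≤ t) (ht : t ≤ γ.len) :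
    dist (γ.toFun s) (γ.toFun t) = t - s := by
  rw [γ.isom s ⟨hs, hst.trans ht⟩ t ⟨hs.trans hst, ht⟩, abs_sub_comm,
    abs_of_nonneg (sub_nonneg.2 hst)]

theorem dist_endpoints (γ : MinGeodesic X) : dist (γ.toFun 0) (γ.toFun γ.len) = γ.len := by
  rw [γ.dist_eq_sub le_rfl γ.len_nonneg le_rfl, sub_zero]

theorem metricBtw (γ : MinGeodesic X) {r s t : ℝ} (hr : 0 ≤ r) (hrs : r ≤ s) (hst : s ≤ t)
    (ht : t ≤ γ.len) : MetricBtw (γ.toFun r) (γ.toFun s) (γ.toFun t) := by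
  rw [MetricBtw, γ.dist_eq_sub hr hrs (hst.trans ht), γ.dist_eq_sub (hr.trans hrs) hst ht,
    γ.dist_eq_sub hr (hrs.trans hst) ht]
  ring

theorem isPropGeodesic_comp_lineMap (γ : MinGeodesic X) {a b : ℝ} (ha : a ∈ Icc 0 γ.len)
    (hb : b ∈ Icc 0 γ.len) : IsPropGeodesic fun t => γ.toFun (AffineMap.lineMap a b t) := by
  intro s hs t ht
  have hmem : ∀ u ∈ Icc (0 : ℝ) 1, AffineMap.lineMap a b u ∈ Icc 0 γ.len :=
    fun u hu => (convex_Icc 0 γ.len).lineMap_mem ha hb hu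
  simp only [AffineMap.lineMap_apply_zero, AffineMap.lineMap_apply_one]
  rw [γ.isom _ (hmem s hs) _ (hmem t ht), γ.isom a ha b hb]
  simpa only [Real.dist_eq] using dist_lineMap_lineMap a b s t

/-- The part of a minimizing geodesic from the parameter `a` on, reparametrized to start at `0`. -/
def drop (γ : MinGeodesic X) (a : ℝ) (ha : a ∈ Icc 0 γ.len) : MinGeodesic X where
  len := γ.len - a
  len_nonneg := sub_nonneg.2 ha.2
  toFun s := γ.toFun (a + s)
  isom s hs t ht := by
    rw [γ.isom _ ⟨add_nonneg ha.1 hs.1, by linarith [hs.2]⟩ _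
      ⟨add_nonneg ha.1 ht.1, by linarith [ht.2]⟩, add_sub_add_left_eq_sub]

/-- A curve on `[0, l]` that does not increase distances and whose endpoints have distance at least
`l` is a minimizing geodesic. -/
def ofDistLe (l : ℝ) (hl : 0 ≤ l) (f : ℝ → X)
    (hf : ∀ s t, 0 ≤ s → s ≤ t → t ≤ l → dist (f s) (f t) ≤ t - s)
    (hend : l ≤ dist (f 0) (f l)) : MinGeodesic X where
  len := l
  len_nonneg := hl
  toFun := f
  isom := by
    have dist_eq : ∀ s ∈ Icc 0 l, ∀ t ∈ Icc 0 l, s ≤ t → dist (f s) (f t) = |s - t| := by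
      intro s hs t ht hst
      rw [abs_sub_comm, abs_of_nonneg (sub_nonneg.2 hst)]
      refine le_antisymm (hf s t hs.1 hst ht.2) ?_
      linarith [dist_triangle4 (f 0) (f s) (f t) (f l), hf 0 s le_rfl hs.1 hs.2,
        hf t l ht.1 ht.2 le_rfl]
    intro s hs t ht
    rcases le_total s t with hst | hts
    · exact dist_eq s hs t ht hst
    · rw [dist_comm, abs_sub_comm, dist_eq t ht s hs hts]

/-- The curve that runs through `γ₁` and then, shifted by the length of `γ₁`, through `γ₂`. -/
noncomputable def concatFun (γ₁ γ₂ : MinGeodesic X) (s : ℝ) : X :=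
  if s ≤ γ₁.len then γ₁.toFun s else γ₂.toFun (s - γ₁.len)

theorem concatFun_of_le (γ₁ γ₂ : MinGeodesic X) {s : ℝ} (hs : s ≤ γ₁.len) :
    concatFun γ₁ γ₂ s = γ₁.toFun s :=
  if_pos hs

theorem concatFun_of_ge {γ₁ γ₂ : MinGeodesic X} (hj : γ₁.toFun γ₁.len = γ₂.toFun 0) {s : ℝ}
    (hs : γ₁.len ≤ s) : concatFun γ₁ γ₂ s = γ₂.toFun (s - γ₁.len) := by
  rcases hs.eq_or_lt with rfl | hlt
  · rw [concatFun_of_le γ₁ γ₂ le_rfl, sub_self, hj]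
  · exact if_neg hlt.not_ge

theorem concatFun_add_len {γ₁ γ₂ : MinGeodesic X} (hj : γ₁.toFun γ₁.len = γ₂.toFun 0) :
    concatFun γ₁ γ₂ (γ₁.len + γ₂.len) = γ₂.toFun γ₂.len := by
  rw [concatFun_of_ge hj (le_add_of_nonneg_right γ₂.len_nonneg), add_sub_cancel_left]

theorem dist_concatFun_le {γ₁ γ₂ : MinGeodesic X} (hj : γ₁.toFun γ₁.len = γ₂.toFun 0) {s t : ℝ}
    (hs : 0 ≤ s) (hst : s ≤ t) (ht : t ≤ γ₁.len + γ₂.len) :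
    dist (concatFun γ₁ γ₂ s) (concatFun γ₁ γ₂ t) ≤ t - s := by
  rcases le_total t γ₁.len with htl | hlt
  · rw [concatFun_of_le _ _ htl, concatFun_of_le _ _ (hst.trans htl), γ₁.dist_eq_sub hs hst htl]
  rw [concatFun_of_ge hj hlt]
  rcases le_total γ₁.len s with hls | hsl
  · rw [concatFun_of_ge hj hls, γ₂.dist_eq_sub (by linarith) (by linarith) (by linarith)]
    linarith
  · rw [concatFun_of_le _ _ hsl]
    calc dist (γ₁.toFun s) (γ₂.toFun (t - γ₁.len))
        ≤ dist (γ₁.toFun s) (γ₁.toFun γ₁.len) + dist (γ₂.toFun 0) (γ₂.toFun (t - γ₁.len)) := by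
          rw [← hj]
          exact dist_triangle _ _ _
      _ = (γ₁.len - s) + (t - γ₁.len - 0) := by
          rw [γ₁.dist_eq_sub hs hsl le_rfl,
            γ₂.dist_eq_sub le_rfl (sub_nonneg.2 hlt) (by linarith)]
      _ = t - s := by ring

/-- The concatenation of two minimizing geodesics whose juncture lies metrically between the two
outer endpoints. -/
noncomputable def concat (γ₁ γ₂ : MinGeodesic X) (hj : γ₁.toFun γ₁.len = γ₂.toFun 0)
    (hbtw : MetricBtw (γ₁.toFun 0) (γ₂.toFun 0) (γ₂.toFun γ₂.len)) : MinGeodesic X :=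
  ofDistLe (γ₁.len + γ₂.len) (add_nonneg γ₁.len_nonneg γ₂.len_nonneg) (concatFun γ₁ γ₂)
    (fun _ _ => dist_concatFun_le hj) (by
      rw [concatFun_of_le _ _ γ₁.len_nonneg, concatFun_add_len hj, ← hbtw, ← hj,
        γ₁.dist_endpoints, hj, γ₂.dist_endpoints])

end MinGeodesic

namespace IsGeodesicSpace

theorem exists_isPropGeodesic (hgeo : IsGeodesicSpace X) (x y : X) :
    ∃ ξ : ℝ → X, IsPropGeodesic ξ ∧ ξ 0 = x ∧ ξ 1 = y := by
  obtain ⟨γ, hx, hy⟩ := hgeo x y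
  exact ⟨_, γ.isPropGeodesic_comp_lineMap (left_mem_Icc.2 γ.len_nonneg)
    (right_mem_Icc.2 γ.len_nonneg), by simp [hx], by simp [hy]⟩

theorem exists_geodesic_through (hgeo : IsGeodesicSpace X) {x y z : X} (h : MetricBtw x y z) :
    ∃ γ : MinGeodesic X, γ.len = dist x z ∧
      γ.toFun 0 = x ∧ γ.toFun (dist x y) = y ∧ γ.toFun (dist x z) = z := by
  obtain ⟨γ₁, rfl, hy₁⟩ := hgeo x y
  obtain ⟨γ₂, rfl, rfl⟩ := hgeo y z
  have hl₁ : dist (γ₁.toFun 0) (γ₂.toFun 0) = γ₁.len := by rw [← hy₁, γ₁.dist_endpoints]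
  have hl : dist (γ₁.toFun 0) (γ₂.toFun γ₂.len) = γ₁.len + γ₂.len := by
    rw [← h, hl₁, γ₂.dist_endpoints]
  refine ⟨γ₁.concat γ₂ hy₁ h, hl.symm, γ₁.concatFun_of_le γ₂ γ₁.len_nonneg, ?_, ?_⟩
  · rw [hl₁]
    exact (γ₁.concatFun_of_le γ₂ le_rfl).trans hy₁
  · rw [hl]
    exact MinGeodesic.concatFun_add_len hy₁

theorem exists_mem_closedBall_dist_le (hgeo : IsGeodesicSpace X) {x y : X} {r e : ℝ} (hr : 0 ≤ r)
    (he : 0 ≤ e) (hy : y ∈ closedBall x (r + e)) : ∃ w ∈ closedBall x r, dist y w ≤ e := by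
  obtain ⟨γ, rfl, rfl⟩ := hgeo x y
  rw [mem_closedBall', γ.dist_endpoints] at hy
  have hle : min r γ.len ≤ γ.len := min_le_right _ _
  have h0 : 0 ≤ min r γ.len := le_min hr γ.len_nonneg
  refine ⟨γ.toFun (min r γ.len), ?_, ?_⟩
  · rw [mem_closedBall', γ.dist_eq_sub le_rfl h0 hle, sub_zero]
    exact min_le_left _ _
  · rw [dist_comm, γ.dist_eq_sub h0 hle le_rfl, sub_le_comm]
    exact le_min (by linarith) (by linarith)

theorem isCompact_closedBall_of_forall_lt [CompleteSpace X] (hgeo : IsGeodesicSpace X) {x : X}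
    {r : ℝ} (hlt : ∀ s < r, IsCompact (closedBall x s)) : IsCompact (closedBall x r) := by
  rcases le_or_gt r 0 with hr | hr
  · exact (subsingleton_closedBall x hr).isCompact
  refine TotallyBounded.isCompact_of_isClosed (totallyBounded_iff.2 fun e he => ?_)
    isClosed_closedBall
  set s := max 0 (r - e / 2)
  have hsr : s < r := max_lt hr (by linarith)
  obtain ⟨t, ht, hcover⟩ := totallyBounded_iff.1 (hlt s hsr).totallyBounded (e / 2) (by linarith)
  refine ⟨t, ht, fun y hy => ?_⟩
  obtain ⟨w, hw, hyw⟩ := hgeo.exists_mem_closedBall_dist_le (r := s) (e := r - s)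
    (le_max_left _ _) (by linarith) (by rwa [add_sub_cancel])
  obtain ⟨q, hq, hwq⟩ := mem_iUnion₂.1 (hcover hw)
  refine mem_iUnion₂.2 ⟨q, hq, ?_⟩
  rw [mem_ball] at hwq ⊢
  linarith [dist_triangle y w q, le_max_right 0 (r - e / 2)]

theorem exists_isCompact_closedBall_add [LocallyCompactSpace X] (hgeo : IsGeodesicSpace X) {x : X}
    {r : ℝ} (hr : 0 ≤ r) (hc : IsCompact (closedBall x r)) :
    ∃ δ > 0, IsCompact (closedBall x (r + δ)) := by
  obtain ⟨δ, hδ, hthick⟩ := hc.exists_isCompact_cthickening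
  refine ⟨δ, hδ, hthick.of_isClosed_subset isClosed_closedBall fun y hy => ?_⟩
  obtain ⟨w, hw, hyw⟩ := hgeo.exists_mem_closedBall_dist_le hr hδ.le hy
  exact mem_cthickening_of_dist_le y w δ _ hw hyw

theorem properSpace [CompleteSpace X] [LocallyCompactSpace X] (hgeo : IsGeodesicSpace X) :
    ProperSpace X := by
  refine ⟨fun x => ?_⟩
  have mono : ∀ {r s : ℝ}, r ≤ s → IsCompact (closedBall x s) → IsCompact (closedBall x r) :=
    fun hrs hs => hs.of_isClosed_subset isClosed_closedBall (closedBall_subset_closedBall hrs)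
  have isClosed_radii : IsClosed {r | IsCompact (closedBall x r)} := by
    refine isClosed_of_closure_subset fun r hr =>
      hgeo.isCompact_closedBall_of_forall_lt fun s hs => ?_
    obtain ⟨u, hsu, hu⟩ := mem_closure_iff.1 hr (Ioi s) isOpen_Ioi hs
    exact mono (le_of_lt hsu) hu
  have isOpen_radii : IsOpen {r | IsCompact (closedBall x r)} := by
    refine isOpen_iff_mem_nhds.2 fun r hr => ?_
    rcases lt_or_ge r 0 with hneg | hnonneg
    · filter_upwards [Iio_mem_nhds hneg] with s hs
      exact (subsingleton_closedBall x (le_of_lt hs)).isCompact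
    · obtain ⟨δ, hδ, hc⟩ := hgeo.exists_isCompact_closedBall_add hnonneg hr
      filter_upwards [Iio_mem_nhds (lt_add_of_pos_right r hδ)] with s hs
      exact mono (le_of_lt hs) hc
  have radii_eq_univ := IsClopen.eq_univ ⟨isClosed_radii, isOpen_radii⟩
    ⟨0, (subsingleton_closedBall x le_rfl).isCompact⟩
  exact eq_univ_iff_forall.1 radii_eq_univ

end IsGeodesicSpace

theorem HasLocallyExtendableGeodesics.exists_overlap (hext : HasLocallyExtendableGeodesics X)
    (hgeo : IsGeodesicSpace X) {p y : X} (hyp : y ≠ p) {r : ℝ} (hr : 0 < r) :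
    ∃ u ≠ y, ∃ z ≠ y, dist y z ≤ r ∧ MetricBtw p u y ∧ MetricBtw u y z := by
  obtain ⟨δ, hδ, hextend⟩ := hext y
  obtain ⟨γ, rfl, rfl⟩ := hgeo p y
  have hlen : 0 < γ.len := by rw [← γ.dist_endpoints]; exact dist_pos.2 hyp.symm
  obtain ⟨a, ha0, haδ, hal⟩ : ∃ a, 0 ≤ a ∧ γ.len - δ ≤ a ∧ a < γ.len :=
    ⟨max 0 (γ.len - δ), le_max_left _ _, le_max_right _ _, max_lt hlen (by linarith)⟩
  have drop_subset : (γ.drop a ⟨ha0, hal.le⟩).image ⊆ closedBall (γ.toFun γ.len) δ := by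
    rintro _ ⟨s, ⟨hs0, hs⟩, rfl⟩
    change s ≤ γ.len - a at hs
    change dist (γ.toFun (a + s)) _ ≤ δ
    rw [γ.dist_eq_sub (by linarith) (by linarith) le_rfl]
    linarith
  obtain ⟨γ', hlen', heq⟩ := hextend _ drop_subset
  change γ'.len = γ.len - a + δ at hlen'
  have hstart : γ'.toFun 0 = γ.toFun a :=
    (heq 0 ⟨le_rfl, sub_nonneg.2 hal.le⟩).trans (congrArg γ.toFun (add_zero a))
  have hend : γ'.toFun (γ.len - a) = γ.toFun γ.len :=
    (heq _ ⟨sub_nonneg.2 hal.le, le_rfl⟩).trans (congrArg γ.toFun (add_sub_cancel a γ.len))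
  obtain ⟨e, he, heδ, her⟩ : ∃ e, 0 < e ∧ e ≤ δ ∧ e ≤ r :=
    ⟨min δ r, lt_min hδ hr, min_le_left _ _, min_le_right _ _⟩
  have hdist : dist (γ.toFun γ.len) (γ'.toFun (γ.len - a + e)) = e := by
    rw [← hend, γ'.dist_eq_sub (by linarith) (by linarith) (by linarith), add_sub_cancel_left]
  refine ⟨γ.toFun a, ?_, γ'.toFun (γ.len - a + e), ?_, hdist.le.trans her,
    γ.metricBtw le_rfl ha0 hal.le le_rfl, ?_⟩
  · rw [← dist_pos, γ.dist_eq_sub ha0 hal.le le_rfl]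
    exact sub_pos.2 hal
  · rw [ne_comm, ← dist_pos, hdist]
    exact he
  · rw [← hstart, ← hend]
    exact γ'.metricBtw le_rfl (by linarith) (by linarith) (by linarith)

namespace IsBusemannNPC

theorem dist_isPropGeodesic_le (hB : IsBusemannNPC X) (hgeo : IsGeodesicSpace X) {ξ : ℝ → X}
    (hξ : IsPropGeodesic ξ) (p : X) {t : ℝ} (ht : t ∈ Icc (0 : ℝ) 1) :
    dist p (ξ t) ≤ (1 - t) * dist p (ξ 0) + t * dist p (ξ 1) := by
  obtain ⟨ζ, hζ, hζ0, rfl⟩ := hgeo.exists_isPropGeodesic (ξ 0) p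
  have along : dist (ζ 1) (ζ t) = (1 - t) * dist (ζ 1) (ξ 0) := by
    rw [hζ 1 (right_mem_Icc.2 zero_le_one) t ht, abs_of_nonneg (sub_nonneg.2 ht.2), hζ0, dist_comm]
  calc dist (ζ 1) (ξ t)
      ≤ dist (ζ 1) (ζ t) + dist (ζ t) (ξ t) := dist_triangle _ _ _
    _ ≤ (1 - t) * dist (ζ 1) (ξ 0) + t * dist (ζ 1) (ξ 1) :=
      add_le_add along.le (hB ζ ξ hζ hξ hζ0 t ht)

theorem convexOn_dist (hB : IsBusemannNPC X) (hgeo : IsGeodesicSpace X) (p : X)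
    (γ : MinGeodesic X) : ConvexOn ℝ (Icc 0 γ.len) fun s => dist p (γ.toFun s) := by
  refine ⟨convex_Icc 0 γ.len, fun s hs t ht a b _ hb hab => ?_⟩
  have h := hB.dist_isPropGeodesic_le hgeo (γ.isPropGeodesic_comp_lineMap hs ht) p
    (t := b) ⟨hb, by linarith⟩
  have hmap : AffineMap.lineMap s t b = a • s + b • t := by
    rw [AffineMap.lineMap_apply_module, ← eq_sub_of_add_eq hab]
  simpa only [AffineMap.lineMap_apply_zero, AffineMap.lineMap_apply_one, hmap,
    ← eq_sub_of_add_eq hab, smul_eq_mul] using h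

/-- The distance from `p` is convex along a geodesic from `u` through `y` to `z` and has slope `1`
on the part from `u` to `y`, hence slope at least `1` afterwards. -/
theorem metricBtw_of_overlap (hB : IsBusemannNPC X) (hgeo : IsGeodesicSpace X) {p u y z : X}
    (huy : u ≠ y) (hpuy : MetricBtw p u y) (huyz : MetricBtw u y z) : MetricBtw p y z := by
  rcases eq_or_ne y z with rfl | hyz
  · simp [MetricBtw]
  obtain ⟨γ, hlen, hu, hy, hz⟩ := hgeo.exists_geodesic_through huyz
  have huy_pos : 0 < dist u y := dist_pos.2 huy
  have hyz_pos : 0 < dist y z := dist_pos.2 hyz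
  have slope_le := (hB.convexOn_dist hgeo p γ).slope_mono_adjacent (left_mem_Icc.2 γ.len_nonneg)
    (hlen ▸ right_mem_Icc.2 γ.len_nonneg) huy_pos (by linarith [huyz.symm] : dist u y < dist u z)
  rw [hu, hy, hz, sub_zero, ← huyz, add_sub_cancel_left, ← hpuy, add_sub_cancel_left,
    div_self huy_pos.ne', le_div_iff₀ hyz_pos, hpuy] at slope_le
  exact le_antisymm (by linarith) (dist_triangle p y z)

theorem exists_metricBtw_near (hB : IsBusemannNPC X) (hgeo : IsGeodesicSpace X)
    (hext : HasLocallyExtendableGeodesics X) {p y : X} (hyp : y ≠ p) {r : ℝ} (hr : 0 < r) :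
    ∃ z ≠ y, dist y z ≤ r ∧ MetricBtw p y z := by
  obtain ⟨u, huy, z, hzy, hdist, hpuy, huyz⟩ := hext.exists_overlap hgeo hyp hr
  exact ⟨z, hzy, hdist, hB.metricBtw_of_overlap hgeo huy hpuy huyz⟩

theorem dist_le_abs_sub_add (hB : IsBusemannNPC X) (hgeo : IsGeodesicSpace X) {p y₁ y₂ z₁ z₂ : X}
    (h₁ : MetricBtw p y₁ z₁) (h₂ : MetricBtw p y₂ z₂) (hz : dist p z₁ = dist p z₂) :
    dist y₁ y₂ ≤ |dist p y₁ - dist p y₂| + dist p y₁ / dist p z₁ * dist z₁ z₂ := by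
  obtain ⟨γ₁, hlen₁, hp₁, hy₁, hz₁⟩ := hgeo.exists_geodesic_through h₁
  obtain ⟨γ₂, hlen₂, hp₂, hy₂, hz₂⟩ := hgeo.exists_geodesic_through h₂
  have hle₁ : dist p y₁ ≤ dist p z₁ := by rw [← h₁]; exact le_add_of_nonneg_right dist_nonneg
  have hle₂ : dist p y₂ ≤ dist p z₂ := by rw [← h₂]; exact le_add_of_nonneg_right dist_nonneg
  have hscale : dist p y₁ / dist p z₁ * dist p z₁ = dist p y₁ :=
    div_mul_cancel_of_imp fun h => le_antisymm (hle₁.trans h.le) dist_nonneg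
  have contraction := hB _ _
    (γ₁.isPropGeodesic_comp_lineMap (left_mem_Icc.2 γ₁.len_nonneg) (right_mem_Icc.2 γ₁.len_nonneg))
    (γ₂.isPropGeodesic_comp_lineMap (left_mem_Icc.2 γ₂.len_nonneg) (right_mem_Icc.2 γ₂.len_nonneg))
    (by simp [hp₁, hp₂]) (dist p y₁ / dist p z₁)
    ⟨by positivity, div_le_one_of_le₀ hle₁ dist_nonneg⟩
  simp only [AffineMap.lineMap_apply_module, smul_eq_mul, mul_zero, zero_add, sub_self, one_mul,
    hlen₁, hlen₂, ← hz, hscale, hy₁, hz₁] at contraction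
  rw [hz, hz₂, ← hz] at contraction
  have along : dist (γ₂.toFun (dist p y₁)) y₂ = |dist p y₁ - dist p y₂| := by
    conv_lhs => rw [← hy₂]
    exact γ₂.isom _ ⟨dist_nonneg, by rw [hlen₂, ← hz]; exact hle₁⟩ _
      ⟨dist_nonneg, by rwa [hlen₂]⟩
  linarith [dist_triangle y₁ (γ₂.toFun (dist p y₁)) y₂]

end IsBusemannNPC

theorem exists_metricBtw_dist_eq [ProperSpace X] {p : X}
    (hnear : ∀ z ≠ p, ∀ r > 0, ∃ w ≠ z, dist z w ≤ r ∧ MetricBtw p z w) {y : X} (hy : y ≠ p)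
    {R : ℝ} (hR : dist p y ≤ R) : ∃ z, MetricBtw p y z ∧ dist p z = R := by
  have hcompact : IsCompact (closedBall p R ∩ {z | MetricBtw p y z}) :=
    (isCompact_closedBall p R).inter_right (isClosed_setOfPred_metricBtw p y)
  obtain ⟨z, ⟨hzR, hyz⟩, hmax⟩ := hcompact.exists_isMaxOn
    ⟨y, mem_closedBall'.2 hR, by simp [MetricBtw]⟩ (f := fun z => dist p z) (by fun_prop)
  rw [mem_closedBall'] at hzR
  refine ⟨z, hyz, hzR.eq_of_not_lt fun hlt => ?_⟩
  have hzp : z ≠ p := by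
    rw [ne_comm, ← dist_pos, ← (show dist p y + dist y z = dist p z from hyz)]
    exact add_pos_of_pos_of_nonneg (dist_pos.2 hy.symm) dist_nonneg
  obtain ⟨w, hwz, hdist, hzw⟩ := hnear z hzp (R - dist p z) (sub_pos.2 hlt)
  have hfarther : dist p z + dist z w = dist p w := hzw
  have hle : dist p w ≤ dist p z :=
    hmax ⟨mem_closedBall'.2 (by linarith), hyz.trans hzw⟩
  linarith [dist_pos.2 hwz.symm]

theorem one_sub_le_lawOfCosines_ratio {a b d η : ℝ} (ha : 0 < a) (hab : a ≤ b) (hd : 0 ≤ d)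
    (hη : 0 ≤ η) (hη2 : η ≤ 2) (hle : d ≤ b - a + η * a) :
    1 - η ≤ (a ^ 2 + b ^ 2 - d ^ 2) / (2 * a * b) := by
  have hb : 0 < b := ha.trans_le hab
  rw [le_div_iff₀ (by positivity)]
  have hsq : d ^ 2 ≤ (b - a + η * a) ^ 2 := by gcongr
  have hgap : 0 ≤ a ^ 2 + b ^ 2 - (b - a + η * a) ^ 2 - (1 - η) * (2 * a * b) :=
    calc 0 ≤ η * (2 - η) * a ^ 2 := mul_nonneg (mul_nonneg hη (sub_nonneg.2 hη2)) (sq_nonneg a)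
      _ = a ^ 2 + b ^ 2 - (b - a + η * a) ^ 2 - (1 - η) * (2 * a * b) := by ring
  linarith

theorem compAngle_comm (p x y : X) : compAngle p x y = compAngle p y x := by
  unfold compAngle
  rw [dist_comm x y, add_comm (dist x p ^ 2), mul_right_comm]

theorem IsBusemannNPC.compAngle_le_arccos (hB : IsBusemannNPC X) (hgeo : IsGeodesicSpace X)
    {p y₁ y₂ z₁ z₂ : X} (hy₁ : y₁ ≠ p) (hy₂ : y₂ ≠ p) (h₁ : MetricBtw p y₁ z₁)
    (h₂ : MetricBtw p y₂ z₂) (hz : dist p z₁ = dist p z₂) :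
    compAngle p y₁ y₂ ≤ Real.arccos (1 - dist z₁ z₂ / dist p z₁) := by
  wlog hle : dist p y₁ ≤ dist p y₂ generalizing y₁ y₂ z₁ z₂
  · rw [compAngle_comm, dist_comm z₁, hz]
    exact this hy₂ hy₁ h₂ h₁ hz.symm (le_of_not_ge hle)
  have hy₁_pos : 0 < dist p y₁ := dist_pos.2 hy₁.symm
  have hz_le : dist z₁ z₂ ≤ 2 * dist p z₁ := by
    linarith [dist_triangle_left z₁ z₂ p]
  have hdist : dist y₁ y₂ ≤ dist p y₂ - dist p y₁ + dist z₁ z₂ / dist p z₁ * dist p y₁ := by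
    have h := hB.dist_le_abs_sub_add hgeo h₁ h₂ hz
    rwa [abs_sub_comm, abs_of_nonneg (sub_nonneg.2 hle), div_mul_comm] at h
  unfold compAngle
  rw [dist_comm y₁ p, dist_comm y₂ p]
  exact Real.arccos_le_arccos (one_sub_le_lawOfCosines_ratio hy₁_pos hle dist_nonneg
    (by positivity) (div_le_of_le_mul₀ dist_nonneg zero_le_two hz_le) hdist)

end BusemannSpaces

/-- A complete, locally compact geodesic metric space with locally extendable
geodesics which is Busemann nonpositively curved is semi-globally `ATB(ε)` for
every `0 < ε < π/2`. -/
theorem busemannNPC_semiGlobalATB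
    {X : Type*} [MetricSpace X] [CompleteSpace X] [LocallyCompactSpace X]
    (hgeo : ∀ x y : X, ∃ γ : MinGeodesic X, γ.toFun 0 = x ∧ γ.toFun γ.len = y)
    (hext : ∀ p : X, ∃ δ : ℝ, 0 < δ ∧
      ∀ γ : MinGeodesic X, γ.image ⊆ Metric.closedBall p δ →
        ∃ γ' : MinGeodesic X, γ'.len = γ.len + δ ∧
          ∀ t ∈ Set.Icc (0 : ℝ) γ.len, γ'.toFun t = γ.toFun t)
    (hBNPC : ∀ γ₁ γ₂ : ℝ → X, IsPropGeodesic γ₁ → IsPropGeodesic γ₂ →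
      γ₁ 0 = γ₂ 0 → ∀ t ∈ Set.Icc (0 : ℝ) 1,
        dist (γ₁ t) (γ₂ t) ≤ t * dist (γ₁ 1) (γ₂ 1))
    (ε : ℝ) (hε0 : 0 < ε) (hε : ε < Real.pi / 2) :
    ∀ (x : X) (R : ℝ), 0 < R → ∃ L : ℕ, ∀ p ∈ Metric.ball x R, ATBPoint ε p L R := by
  intro x R hR
  have hB : IsBusemannNPC X := hBNPC
  have : ProperSpace X := IsGeodesicSpace.properSpace hgeo
  have hcos : Real.cos ε < 1 :=
    Real.cos_zero ▸ Real.cos_lt_cos_of_nonneg_of_le_pi_div_two le_rfl hε.le hε0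
  obtain ⟨L, hL⟩ := exists_card_forall_exists_dist_lt
    (isCompact_closedBall x (2 * R)).totallyBounded (mul_pos (sub_pos.2 hcos) hR)
  refine ⟨L, fun p hp y hy => ?_⟩
  have hprolong : ∀ i, ∃ z, MetricBtw p (y i) z ∧ dist p z = R := fun i =>
    exists_metricBtw_dist_eq (fun z hz r hr => hB.exists_metricBtw_near hgeo hext hz hr)
      (hy i).2 (mem_ball'.1 (hy i).1).le
  choose z hbtw hzR using hprolong
  have hz_mem : ∀ i, z i ∈ closedBall x (2 * R) := fun i => by
    rw [mem_closedBall']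
    linarith [dist_triangle x p (z i), mem_ball'.1 hp, hzR i]
  obtain ⟨i, j, hij, hlt⟩ := hL z hz_mem
  refine ⟨i, j, hij, (hB.compAngle_le_arccos hgeo (hy i).2 (hy j).2 (hbtw i) (hbtw j)
    ((hzR i).trans (hzR j).symm)).trans_lt ?_⟩
  rw [hzR i, ← Real.arccos_cos hε0.le (by linarith [Real.pi_pos])]
  refine Real.arccos_lt_arccos (Real.neg_one_le_cos ε) ?_ (sub_le_self 1 (by positivity))
  rwa [lt_sub_comm, div_lt_iff₀ hR]
end

section
/- For every n ∈ ℕ and 0 < ε < π/2, there exists L = L(n, ε) ∈ ℕ such that every point p of the Euclidean space ℝⁿ has the following property: for any points y₁, …, y_L ∈ ℝⁿ∖{p}, there exist i ≠ j such that the minimum over points x on the line segment from p to yⱼ of the Euclidean distance |yᵢ − x| is at most β(ε)·|p − yᵢ|. -/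
/-!
In a finite-dimensional space the closed unit ball is totally bounded, so among sufficiently many
points two, say `x` and `y`, are seen from `p` in directions less than `δ` apart. Let `x` be the one
nearer to `p`. The point of the segment from `p` to `y` at distance `dist p x` from `p` is then
within `δ * dist p x` of `x`.
-/

/-- The constant `β(ε) = (1 - cos ε) sin ε / (2 (1 + sin ε))`. -/
noncomputable def beta (ε : ℝ) : ℝ :=
  (1 - Real.cos ε) * Real.sin ε / (2 * (1 + Real.sin ε))

open scoped Uniformity in
theorem exists_fin_ne_mem_of_totallyBounded {X : Type*} [UniformSpace X] {s : Set X}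
    (hs : TotallyBounded s) {V : SetRel X X} (hV : V ∈ 𝓤 X) :
    ∃ L : ℕ, ∀ u : Fin L → X, (∀ i, u i ∈ s) → ∃ i j, i ≠ j ∧ (u i, u j) ∈ V := by
  obtain ⟨W, hW, hWsymm, hWV⟩ := comp_symm_mem_uniformity_sets hV
  obtain ⟨t, ht, hst⟩ := hs W hW
  refine ⟨ht.toFinset.card + 1, fun u hu ↦ ?_⟩
  have exists_center (i) : ∃ c ∈ t, (u i, c) ∈ W := by simpa using hst (hu i)
  choose c hct huc using exists_center
  obtain ⟨i, -, j, -, hij, hc⟩ := Finset.exists_ne_map_eq_of_card_lt_of_maps_to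
    (s := Finset.univ) (t := ht.toFinset) (f := c) (by simp) (by simp [Set.MapsTo, hct])
  exact ⟨i, j, hij, hWV ⟨c i, huc i, hc ▸ hWsymm.symm _ _ (huc j)⟩⟩

theorem exists_fin_ne_dist_lt_of_totallyBounded {X : Type*} [PseudoMetricSpace X] {s : Set X}
    (hs : TotallyBounded s) {δ : ℝ} (hδ : 0 < δ) :
    ∃ L : ℕ, ∀ u : Fin L → X, (∀ i, u i ∈ s) → ∃ i j, i ≠ j ∧ dist (u i) (u j) < δ :=
  exists_fin_ne_mem_of_totallyBounded hs (Metric.dist_mem_uniformity hδ)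

section Directions

open NormedSpace (normalize norm_smul_normalize)

variable {E : Type*} [NormedAddCommGroup E] [NormedSpace ℝ E]

theorem norm_normalize_le_one (x : E) : ‖normalize x‖ ≤ 1 := by
  rw [NormedSpace.normalize, norm_smul, norm_inv, norm_norm]
  exact inv_mul_le_one

theorem dist_norm_smul_normalize (x y : E) :
    dist x (‖x‖ • normalize y) = ‖x‖ * dist (normalize x) (normalize y) :=
  calc dist x (‖x‖ • normalize y)
      = dist (‖x‖ • normalize x) (‖x‖ • normalize y) := by rw [norm_smul_normalize]
    _ = ‖x‖ * dist (normalize x) (normalize y) := by rw [dist_smul₀, norm_norm]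

theorem norm_smul_normalize_mem_segment {x y : E} (h : ‖x‖ ≤ ‖y‖) :
    ‖x‖ • normalize y ∈ segment ℝ 0 y := by
  rw [segment_eq_image']
  refine ⟨‖x‖ / ‖y‖, ⟨by positivity, div_le_one_of_le₀ h (norm_nonneg y)⟩, ?_⟩
  simp only [NormedSpace.normalize, smul_smul, sub_zero, zero_add, div_eq_mul_inv]

theorem exists_mem_segment_dist_eq {p x y : E} (h : dist p x ≤ dist p y) :
    ∃ z ∈ segment ℝ p y,
      dist x z = dist p x * dist (normalize (x - p)) (normalize (y - p)) := by
  rw [dist_comm p, dist_comm p, dist_eq_norm, dist_eq_norm] at h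
  refine ⟨p + ‖x - p‖ • normalize (y - p), ?_, ?_⟩
  · simpa using (mem_segment_translate ℝ p).2 (norm_smul_normalize_mem_segment h)
  · rw [dist_comm p, dist_eq_norm x p, ← dist_norm_smul_normalize, ← dist_sub_right x _ p,
      add_sub_cancel_left]

theorem euclidean_atbStar_general [FiniteDimensional ℝ E] {δ : ℝ} (hδ : 0 < δ) :
    ∃ L : ℕ, ∀ p : E, ∀ y : Fin L → E,
      ∃ i j, i ≠ j ∧ ∃ x ∈ segment ℝ p (y j), dist (y i) x ≤ δ * dist p (y i) := by
  -- The ball rather than the sphere, because `normalize 0 = 0`.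
  obtain ⟨L, hL⟩ := exists_fin_ne_dist_lt_of_totallyBounded
    (isCompact_closedBall (0 : E) 1).totallyBounded hδ
  refine ⟨L, fun p y ↦ ?_⟩
  obtain ⟨i, j, hij, hdir⟩ := hL (fun i ↦ normalize (y i - p)) fun i ↦
    mem_closedBall_zero_iff.2 (norm_normalize_le_one _)
  wlog hle : dist p (y i) ≤ dist p (y j) generalizing i j
  · exact this j i hij.symm (by rwa [dist_comm]) (le_of_not_ge hle)
  obtain ⟨x, hx, hdist⟩ := exists_mem_segment_dist_eq hle
  refine ⟨i, j, hij, x, hx, ?_⟩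
  rw [hdist, mul_comm]
  gcongr

end Directions

theorem beta_pos {ε : ℝ} (hε0 : 0 < ε) (hε : ε < Real.pi) : 0 < beta ε := by
  have hsin : 0 < Real.sin ε := Real.sin_pos_of_pos_of_lt_pi hε0 hε
  have hcos : 0 < 1 - Real.cos ε :=
    sub_pos.2 (Real.cos_zero ▸ Real.cos_lt_cos_of_nonneg_of_le_pi le_rfl hε.le hε0)
  unfold beta
  positivity

/-- For every `n` and `0 < ε < π/2` there is `L = L(n, ε)` such that every point `p`
of Euclidean `n`-space satisfies the `ATB*(ε)` condition with respect to the linear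
quasi-bicombing, with constants `L` and `R = ∞`: among any `L` points `yᵢ ≠ p`, some
`yᵢ` is within distance `β(ε)·dist p yᵢ` of the segment from `p` to `yⱼ` for some `j ≠ i`. -/
theorem euclidean_atbStar (n : ℕ) (ε : ℝ) (hε0 : 0 < ε) (hε : ε < Real.pi / 2) :
    ∃ L : ℕ, ∀ p : EuclideanSpace ℝ (Fin n), ∀ y : Fin L → EuclideanSpace ℝ (Fin n),
      (∀ i, y i ≠ p) →
      ∃ i j, i ≠ j ∧ ∃ t ∈ Set.Icc (0 : ℝ) 1,
        dist (y i) ((1 - t) • p + t • y j) ≤ beta ε * dist p (y i) := by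
  obtain ⟨L, hL⟩ := euclidean_atbStar_general (E := EuclideanSpace ℝ (Fin n))
    (beta_pos hε0 (by linarith))
  exact ⟨L, fun p y _ ↦ by simpa only [segment_eq_image, Set.exists_mem_image] using hL p y⟩
end

section
/- Let (X,d) be a proper geodesic metric space on which Γ = ℤⁿ acts cocompactly and properly discontinuously by isometries, and suppose there is a continuous map F : X → ℝⁿ equivariant with respect to the given action of ℤⁿ on X and the standard action of ℤⁿ on ℝⁿ by translations. Fix x₀ ∈ X. Then there exists a constant C ≥ 0 such that d(x₀, g(x₀)) ≤ d(x₀, g²(x₀))/2 + C for every g ∈ Γ. -/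
/-!
Lattice points that shadow a geodesic from `x₀` to `g² x₀` form a path from `0` to `2g` in the
group, whose steps map to bounded vectors of `ℝⁿ`. As in the necklace splitting problem, the
steps can be given signs, with at most `n` changes along the path, so that the positive and the
negative steps both sum to `g` up to a bounded error: this is a discrete form of the Hobby–Rice
theorem. One of the two classes carries at most half of the length of the geodesic, and it
consists of boundedly many subpaths, each of which is a geodesic up to a bounded error.

The signs come from Tucker's lemma for the barycentric subdivision of a cross-polytope, applied to
sign vectors. It follows from Ky Fan's parity count: if no edge had antipodal labels, then the
number of flags whose labels alternate in sign would be odd in each dimension, but there are none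
as soon as the dimension exceeds the number of labels. The count passes from one dimension to the
next by pairing antipodal flags and summing a coboundary over all facets.
-/

open scoped Finset List

section Cochains

variable {α β : Type*}

/-- The mod 2 simplicial coboundary of a cochain on ordered simplices, a simplex being the list of
its vertices: the sum of the values of the cochain on the facets of the simplex. -/
def coboundary (f : List α → ZMod 2) : List α → ZMod 2
  | [] => 0
  | v :: σ => f σ + coboundary (fun ρ => f (v :: ρ)) σ

theorem coboundary_congr {f g : List α → ZMod 2} {σ : List α}
    (h : ∀ ρ, ρ <+ σ → ρ.length + 1 = σ.length → f ρ = g ρ) :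
    coboundary f σ = coboundary g σ := by
  induction σ generalizing f g with
  | nil => rfl
  | cons v σ ih =>
    simp only [coboundary]
    rw [h σ (List.sublist_cons_self v σ) rfl,
      ih fun ρ hρ hlen => h _ (hρ.cons_cons v) (by simp [hlen])]

theorem coboundary_add (f g : List α → ZMod 2) (σ : List α) :
    coboundary (fun ρ => f ρ + g ρ) σ = coboundary f σ + coboundary g σ := by
  induction σ generalizing f g with
  | nil => simp [coboundary]
  | cons v σ ih =>
    simp only [coboundary, ih]
    ring

theorem coboundary_zero (σ : List α) : coboundary (fun _ => 0) σ = 0 := by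
  induction σ with
  | nil => rfl
  | cons v σ ih => simp [coboundary, ih]

theorem coboundary_coboundary (f : List α → ZMod 2) (σ : List α) :
    coboundary (coboundary f) σ = 0 := by
  induction σ generalizing f with
  | nil => rfl
  | cons v σ ih =>
    simp only [coboundary, coboundary_add, ih, add_zero, CharTwo.add_self_eq_zero]

theorem coboundary_map (f : List β → ZMod 2) (φ : α → β) (σ : List α) :
    coboundary f (σ.map φ) = coboundary (fun ρ => f (ρ.map φ)) σ := by
  induction σ generalizing f with
  | nil => rfl
  | cons v σ ih => simp only [List.map_cons, coboundary, ih]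

theorem coboundary_perm {f : List α → ZMod 2} (hf : ∀ ρ ρ' : List α, ρ ~ ρ' → f ρ = f ρ')
    {σ σ' : List α} (h : σ ~ σ') : coboundary f σ = coboundary f σ' := by
  induction h generalizing f with
  | nil => rfl
  | cons v h ih =>
    simp only [coboundary]
    rw [hf _ _ h, ih fun ρ ρ' hρ => hf _ _ (hρ.cons v)]
  | swap v w σ =>
    simp only [coboundary]
    rw [← add_assoc, ← add_assoc, add_comm (f (v :: σ)),
      coboundary_congr fun ρ _ _ => hf _ _ (List.Perm.swap v w ρ)]
  | trans _ _ ih₁ ih₂ => exact (ih₁ hf).trans (ih₂ hf)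

/-- The mod 2 barycentric subdivision of a cochain `f` whose vertices are themselves simplices:
on a simplex `σ` with `m` vertices, it sums `f` over the complete flags
`[σ_m, …, σ_1]` of faces of `σ = σ_m`, where `σ_i` has `i` vertices. -/
def subdivide : ℕ → (List (List α) → ZMod 2) → List α → ZMod 2
  | 0, f, _ => f []
  | m + 1, f, σ => coboundary (subdivide m fun τ => f (σ :: τ)) σ

theorem subdivide_add (m : ℕ) (f g : List (List α) → ZMod 2) (σ : List α) :
    subdivide m (fun τ => f τ + g τ) σ = subdivide m f σ + subdivide m g σ := by
  induction m generalizing f g σ with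
  | zero => rfl
  | succ m ih =>
    simp only [subdivide, ← coboundary_add]
    congr 1
    ext ρ
    exact ih _ _ ρ

theorem subdivide_zero (m : ℕ) (σ : List α) : subdivide m (fun _ => 0) σ = 0 := by
  induction m generalizing σ with
  | zero => rfl
  | succ m ih => simp only [subdivide, funext ih, coboundary_zero]

theorem subdivide_map (m : ℕ) (f : List (List β) → ZMod 2) (φ : α → β) (σ : List α) :
    subdivide m f (σ.map φ) = subdivide m (fun τ => f (τ.map (List.map φ))) σ := by
  induction m generalizing f σ with
  | zero => rfl
  | succ m ih => simp only [subdivide, coboundary_map, ih, List.map_cons]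

theorem subdivide_congr {m : ℕ} {f g : List (List α) → ZMod 2} {σ : List α} (hσ : σ.length = m)
    (h : ∀ τ : List (List α), τ.length = m → (∀ x ∈ τ, x ≠ [] ∧ x <+ σ) →
      τ.Pairwise (fun x y => y <+ x) → f τ = g τ) :
    subdivide m f σ = subdivide m g σ := by
  induction m generalizing f g σ with
  | zero => exact h [] rfl (by simp) List.Pairwise.nil
  | succ m ih =>
    refine coboundary_congr fun ρ hρ hlen => ih (by omega) fun τ hτ hmem hpw => ?_
    refine h _ (by simp [hτ]) (List.forall_mem_cons.2 ⟨⟨?_, List.Sublist.refl σ⟩, fun x hx => ?_⟩)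
      (List.pairwise_cons.2 ⟨fun x hx => (hmem x hx).2.trans hρ, hpw⟩)
    · exact List.ne_nil_of_length_eq_add_one hσ
    · exact ⟨(hmem x hx).1, (hmem x hx).2.trans hρ⟩

theorem subdivide_coboundary (m : ℕ) (f : List (List α) → ZMod 2) (σ : List α) :
    subdivide (m + 1) (coboundary f) σ = coboundary (subdivide m f) σ := by
  induction m generalizing f σ with
  | zero => simp [subdivide, coboundary]
  | succ m ih =>
    have hcons (ρ : List α) : subdivide (m + 1) (fun τ => coboundary f (σ :: τ)) ρ =
        subdivide (m + 1) f ρ + coboundary (subdivide m fun τ => f (σ :: τ)) ρ := by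
      simp only [coboundary, subdivide_add, ih]
    rw [subdivide, funext hcons, coboundary_add, coboundary_coboundary, add_zero]

end Cochains

section Octahedron

/-- The antipodal map of the cross-polytope whose vertices `(i, s)` stand for the signed basis
vectors `s • e_i`. -/
def antipode {ι : Type*} (a : ι × ℤˣ) : ι × ℤˣ := (a.1, -a.2)

theorem antipode_antipode {ι : Type*} (a : ι × ℤˣ) : antipode (antipode a) = a := by
  simp [antipode]

/-- The facet of the `k`-dimensional cross-polytope in the orthant with signs `z`. -/
def facet (z : ℕ → ℤˣ) : ℕ → List (ℕ × ℤˣ)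
  | 0 => []
  | k + 1 => (k, z k) :: facet z k

theorem length_facet (z : ℕ → ℤˣ) (k : ℕ) : (facet z k).length = k := by
  induction k with
  | zero => rfl
  | succ k ih => rw [facet, List.length_cons, ih]

theorem facet_congr {z z' : ℕ → ℤˣ} {k : ℕ} (h : ∀ j < k, z j = z' j) :
    facet z k = facet z' k := by
  induction k with
  | zero => rfl
  | succ k ih => rw [facet, facet, h k k.lt_succ_self, ih fun j hj => h j (hj.trans k.lt_succ_self)]

theorem facet_update_succ (z : ℕ → ℤˣ) (k : ℕ) (s : ℤˣ) :
    facet (Function.update z k s) (k + 1) = (k, s) :: facet z k := by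
  rw [facet, Function.update_self,
    facet_congr fun j hj => Function.update_of_ne (Nat.ne_of_lt hj) s z]

/-- The sum of a mod 2 cochain over all facets of the `k`-dimensional cross-polytope. -/
def orthantSum : ℕ → (List (ℕ × ℤˣ) → ZMod 2) → ZMod 2
  | 0, f => f []
  | k + 1, f => orthantSum k (fun σ => f ((k, 1) :: σ)) + orthantSum k (fun σ => f ((k, -1) :: σ))

theorem orthantSum_congr {k : ℕ} {f g : List (ℕ × ℤˣ) → ZMod 2}
    (h : ∀ z, f (facet z k) = g (facet z k)) : orthantSum k f = orthantSum k g := by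
  induction k generalizing f g with
  | zero => exact h 1
  | succ k ih =>
    have hcons (s : ℤˣ) (z : ℕ → ℤˣ) : f ((k, s) :: facet z k) = g ((k, s) :: facet z k) := by
      rw [← facet_update_succ, h]
    exact congrArg₂ (· + ·) (ih (hcons 1)) (ih (hcons (-1)))

theorem orthantSum_add (k : ℕ) (f g : List (ℕ × ℤˣ) → ZMod 2) :
    orthantSum k (fun σ => f σ + g σ) = orthantSum k f + orthantSum k g := by
  induction k generalizing f g with
  | zero => rfl
  | succ k ih => simp only [orthantSum, ih]; ring

theorem orthantSum_zero (k : ℕ) : orthantSum k (fun _ => 0) = 0 := by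
  induction k with
  | zero => rfl
  | succ k ih => simp only [orthantSum, ih, add_zero]

theorem orthantSum_coboundary (k : ℕ) (f : List (ℕ × ℤˣ) → ZMod 2) :
    orthantSum k (coboundary f) = 0 := by
  induction k generalizing f with
  | zero => rfl
  | succ k ih => simp only [orthantSum, coboundary, orthantSum_add, ih, CharTwo.add_self_eq_zero]

theorem orthantSum_coboundary_cons (k : ℕ) (f : List (ℕ × ℤˣ) → ZMod 2) (v : ℕ × ℤˣ) :
    orthantSum k (fun σ => coboundary f (v :: σ)) = orthantSum k f := by
  simp only [coboundary, orthantSum_add, orthantSum_coboundary, add_zero]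

theorem orthantSum_map_antipode (k : ℕ) (f : List (ℕ × ℤˣ) → ZMod 2) :
    orthantSum k (fun σ => f (σ.map antipode)) = orthantSum k f := by
  induction k generalizing f with
  | zero => rfl
  | succ k ih =>
    simp only [orthantSum, List.map_cons, antipode, neg_neg]
    rw [ih fun σ => f ((k, -1) :: σ), ih fun σ => f ((k, 1) :: σ), add_comm]

end Octahedron

section Alternation

variable {ι : Type*}

/-- The indicator of the lists of signed labels whose signs alternate, starting with `s`. -/
def alternation (s : ℤˣ) : List (ι × ℤˣ) → ZMod 2
  | [] => 1
  | a :: σ => if a.2 = s then alternation (-s) σ else 0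

theorem coboundary_alternation (s : ℤˣ) (σ : List (ι × ℤˣ)) :
    coboundary (alternation s) σ = alternation s σ + alternation (-s) σ := by
  induction σ generalizing s with
  | nil => rfl
  | cons a σ ih =>
    by_cases ha : a.2 = s
    · have hne : a.2 ≠ -s := by rw [Int.units_ne_iff_eq_neg, neg_neg, ha]
      simp only [coboundary, alternation, if_pos ha, if_neg hne]
      rw [ih, neg_neg, add_comm (alternation (-s) σ), ← add_assoc, CharTwo.add_self_eq_zero,
        zero_add, add_zero]
    · have hneg : a.2 = -s := Int.units_ne_iff_eq_neg.1 ha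
      simp only [coboundary, alternation, if_neg ha, if_pos hneg]
      rw [coboundary_zero, neg_neg, add_zero, zero_add]

theorem alternation_map_antipode (s : ℤˣ) (σ : List (ι × ℤˣ)) :
    alternation s (σ.map antipode) = alternation (-s) σ := by
  induction σ generalizing s with
  | nil => rfl
  | cons a σ ih => simp only [List.map_cons, alternation, antipode, neg_eq_iff_eq_neg, ih]

theorem isChain_of_alternation_ne_zero {s : ℤˣ} {σ : List (ι × ℤˣ)} (h : alternation s σ ≠ 0) :
    σ.IsChain (fun a b => a.2 ≠ b.2) := by
  induction σ generalizing s with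
  | nil => exact List.isChain_nil
  | cons a σ ih =>
    simp only [alternation, ne_eq, ite_eq_right_iff, Classical.not_imp] at h
    obtain ⟨rfl, hσ⟩ := h
    refine (ih hσ).cons fun b hb => ?_
    obtain ⟨ρ, rfl⟩ : ∃ ρ, σ = b :: ρ := ⟨_, (List.cons_head?_tail hb).symm⟩
    simp only [alternation, ite_eq_right_iff, Classical.not_imp] at hσ
    rw [hσ.1]
    exact Int.units_ne_iff_eq_neg.2 (neg_neg a.2).symm

variable [LinearOrder ι]

/-- The lexicographic sorting of a list of signed labels. -/
def lexSort (σ : List (ι × ℤˣ)) : List (ι × ℤˣ) :=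
  (Multiset.sort (σ.map toLex : Multiset (ι ×ₗ ℤˣ))).map ofLex

theorem lexSort_perm (σ : List (ι × ℤˣ)) : lexSort σ ~ σ := by
  have h : Multiset.sort (σ.map toLex : Multiset (ι ×ₗ ℤˣ)) ~ σ.map toLex :=
    Multiset.coe_eq_coe.1 (Multiset.sort_eq _ _)
  simpa [lexSort, Function.comp_def] using h.map ofLex

theorem pairwise_lexSort (σ : List (ι × ℤˣ)) :
    (lexSort σ).Pairwise (fun a b => toLex a ≤ toLex b) := by
  simpa [lexSort, List.pairwise_map] using
    Multiset.pairwise_sort (σ.map toLex : Multiset (ι ×ₗ ℤˣ)) (· ≤ ·)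

theorem lexSort_eq_of_perm {σ τ : List (ι × ℤˣ)} (h : σ ~ τ)
    (hτ : τ.Pairwise (fun a b => toLex a ≤ toLex b)) : lexSort σ = τ :=
  ((lexSort_perm σ).trans h).eq_of_pairwise
    (fun _ _ _ _ hab hba => toLex.injective (le_antisymm hab hba)) (pairwise_lexSort σ) hτ

/-- The indicator of Ky Fan's alternating simplices of signed labels: those whose signs
alternate, starting with `s`, when the vertices are listed in increasing order. -/
def altCochain (s : ℤˣ) (σ : List (ι × ℤˣ)) : ZMod 2 :=
  alternation s (lexSort σ)

theorem altCochain_perm (s : ℤˣ) {σ τ : List (ι × ℤˣ)} (h : σ ~ τ) :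
    altCochain s σ = altCochain s τ := by
  rw [altCochain, altCochain,
    lexSort_eq_of_perm (h.trans (lexSort_perm τ).symm) (pairwise_lexSort τ)]

theorem coboundary_altCochain (s : ℤˣ) (σ : List (ι × ℤˣ)) :
    coboundary (altCochain s) σ = altCochain s σ + altCochain (-s) σ := by
  have hsub (ρ : List (ι × ℤˣ)) (hρ : ρ <+ lexSort σ) : altCochain s ρ = alternation s ρ := by
    rw [altCochain, lexSort_eq_of_perm (List.Perm.refl ρ) ((pairwise_lexSort σ).sublist hρ)]
  rw [← coboundary_perm (fun _ _ => altCochain_perm s) (lexSort_perm σ),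
    coboundary_congr fun ρ hρ _ => hsub ρ hρ, coboundary_alternation, altCochain, altCochain]

theorem altCochain_map_antipode (s : ℤˣ) {σ : List (ι × ℤˣ)}
    (hσ : ∀ a ∈ σ, ∀ b ∈ σ, a ≠ antipode b) :
    altCochain s (σ.map antipode) = altCochain (-s) σ := by
  have hsorted : ((lexSort σ).map antipode).Pairwise (fun a b => toLex a ≤ toLex b) := by
    refine List.pairwise_map.2 ((pairwise_lexSort σ).imp_of_mem fun {a b} ha hb hab => ?_)
    rw [(lexSort_perm σ).mem_iff] at ha hb
    rw [Prod.Lex.toLex_le_toLex] at hab ⊢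
    refine hab.imp_right fun h => ⟨h.1, le_of_eq ?_⟩
    by_contra hne
    exact hσ a ha b hb (Prod.ext h.1 (by simpa [antipode, Int.units_ne_iff_eq_neg] using hne))
  rw [altCochain, lexSort_eq_of_perm ((lexSort_perm σ).symm.map antipode) hsorted,
    alternation_map_antipode, altCochain]

theorem altCochain_eq_zero_of_card_lt (s : ℤˣ) {σ : List (ι × ℤˣ)} {T : Finset ι}
    (hσ : ∀ a ∈ σ, ∀ b ∈ σ, a ≠ antipode b) (hT : ∀ a ∈ σ, a.1 ∈ T) (hcard : #T < σ.length) :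
    altCochain s σ = 0 := by
  by_contra hne
  have hchain : (lexSort σ).IsChain (fun a b => a.1 < b.1) := by
    refine List.isChain_iff_getElem.2 fun i hi => ?_
    have hle := List.pairwise_iff_getElem.1 (pairwise_lexSort σ) i (i + 1) (by omega) hi (by omega)
    have hsign := List.isChain_iff_getElem.1 (isChain_of_alternation_ne_zero hne) i hi
    refine (Prod.Lex.toLex_le_toLex.1 hle).resolve_right fun h => ?_
    exact hσ _ ((lexSort_perm σ).mem_iff.1 (List.getElem_mem _)) _
      ((lexSort_perm σ).mem_iff.1 (List.getElem_mem _))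
      (Prod.ext h.1 (Int.units_ne_iff_eq_neg.1 hsign))
  have hnodup : ((lexSort σ).map Prod.fst).Nodup :=
    (List.isChain_iff_pairwise.1 ((List.isChain_map Prod.fst).2 hchain)).imp ne_of_lt
  have hsub : ((lexSort σ).map Prod.fst).toFinset ⊆ T := fun i hi => by
    obtain ⟨a, ha, rfl⟩ := List.mem_map.1 (List.mem_toFinset.1 hi)
    exact hT a ((lexSort_perm σ).mem_iff.1 ha)
  have hle := Finset.card_le_card hsub
  rw [List.toFinset_card_of_nodup hnodup, List.length_map, (lexSort_perm σ).length_eq] at hle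
  exact hcard.not_ge hle

end Alternation

section Tucker

variable {ι : Type*} {N : ℕ} {l : List (ℕ × ℤˣ) → ι × ℤˣ}

theorem facet_sublist_facet (z : ℕ → ℤˣ) {k m : ℕ} (h : k ≤ m) : facet z k <+ facet z m := by
  induction m, h using Nat.le_induction with
  | base => exact List.Sublist.refl _
  | succ m _ ih => exact ih.cons _

theorem ne_antipode_of_mem_map_flag
    (hne : ∀ z x y, x ≠ [] → x <+ y → y <+ facet z N → l x ≠ antipode (l y))
    {z : ℕ → ℤˣ} {τ : List (List (ℕ × ℤˣ))} (hmem : ∀ x ∈ τ, x ≠ [] ∧ x <+ facet z N)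
    (hτ : τ.Pairwise fun x y => y <+ x) : ∀ a ∈ τ.map l, ∀ b ∈ τ.map l, a ≠ antipode b := by
  have hflag {x y} (hx : x ∈ τ) (hy : y ∈ τ) : x <+ y ∨ y <+ x :=
    List.Pairwise.forall_of_forall_of_flip (R := fun x y => x <+ y ∨ y <+ x)
      (fun x _ => Or.inl (List.Sublist.refl x)) (hτ.imp Or.inr) (hτ.imp Or.inl) hx hy
  simp only [List.mem_map, forall_exists_index, and_imp, forall_apply_eq_imp_iff₂]
  intro x hx y hy h
  rcases hflag hx hy with hxy | hyx
  · exact hne z x y (hmem x hx).1 hxy (hmem y hy).2 h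
  · exact hne z y x (hmem y hy).1 hyx (hmem x hx).2 (by rw [h, antipode_antipode])

variable [LinearOrder ι]

theorem subdivide_altCochain_map_antipode
    (hodd : ∀ z x, x ≠ [] → x <+ facet z N → l (x.map antipode) = antipode (l x))
    (hne : ∀ z x y, x ≠ [] → x <+ y → y <+ facet z N → l x ≠ antipode (l y))
    {k : ℕ} (hk : k ≤ N) (s : ℤˣ) (z : ℕ → ℤˣ) :
    subdivide k (fun τ => altCochain s (τ.map l)) ((facet z k).map antipode) =
      subdivide k (fun τ => altCochain (-s) (τ.map l)) (facet z k) := by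
  rw [subdivide_map]
  refine subdivide_congr (length_facet z k) fun τ _ hmem hτ => ?_
  have hmemN (x) (hx : x ∈ τ) : x ≠ [] ∧ x <+ facet z N :=
    ⟨(hmem x hx).1, (hmem x hx).2.trans (facet_sublist_facet z hk)⟩
  have hmap : (τ.map (List.map antipode)).map l = (τ.map l).map antipode := by
    simp only [List.map_map]
    exact List.map_congr_left fun x hx => hodd z x (hmemN x hx).1 (hmemN x hx).2
  rw [hmap, altCochain_map_antipode s (ne_antipode_of_mem_map_flag hne hmemN hτ)]

theorem orthantSum_subdivide_altCochain
    (hodd : ∀ z x, x ≠ [] → x <+ facet z N → l (x.map antipode) = antipode (l x))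
    (hne : ∀ z x y, x ≠ [] → x <+ y → y <+ facet z N → l x ≠ antipode (l y))
    {k : ℕ} (hk : k ≤ N) :
    orthantSum k (subdivide k fun τ => altCochain 1 (τ.map l)) = 1 := by
  induction k with
  | zero => simp [orthantSum, subdivide, altCochain, lexSort, alternation]
  | succ k ih =>
    set f : ℤˣ → List (List (ℕ × ℤˣ)) → ZMod 2 := fun s τ => altCochain s (τ.map l)
    have hcob (τ) : f 1 τ + f (-1) τ = coboundary (f 1) τ := by
      rw [← coboundary_map, coboundary_altCochain]
    have hlower : orthantSum k (fun σ => subdivide (k + 1) (f 1) ((k, -1) :: σ)) =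
        orthantSum k (fun σ => subdivide (k + 1) (f (-1)) ((k, 1) :: σ)) := by
      rw [← orthantSum_map_antipode]
      refine orthantSum_congr fun z => ?_
      rw [← facet_update_succ, ← subdivide_altCochain_map_antipode hodd hne hk, facet_update_succ]
      rfl
    calc orthantSum (k + 1) (subdivide (k + 1) (f 1))
        = orthantSum k fun σ => subdivide (k + 1) (coboundary (f 1)) ((k, 1) :: σ) := by
          rw [orthantSum, hlower, ← orthantSum_add]
          simp only [← subdivide_add, hcob]
      _ = orthantSum k (subdivide k (f 1)) := by
          simp only [subdivide_coboundary, orthantSum_coboundary_cons]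
      _ = 1 := ih (k.le_succ.trans hk)

/-- Nonempty sublists of facets are the faces of the cross-polytope, that is, the vertices of its
barycentric subdivision, and `x <+ y` are the edges of the latter. -/
theorem octahedral_tucker {T : Finset ι} (hT : #T < N)
    (hmem : ∀ z x, x ≠ [] → x <+ facet z N → (l x).1 ∈ T)
    (hodd : ∀ z x, x ≠ [] → x <+ facet z N → l (x.map antipode) = antipode (l x)) :
    ∃ z x y, x ≠ [] ∧ x <+ y ∧ y <+ facet z N ∧ l x = antipode (l y) := by
  by_contra! hne
  have hvanish (z : ℕ → ℤˣ) : subdivide N (fun τ => altCochain 1 (τ.map l)) (facet z N) = 0 := by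
    rw [subdivide_congr (g := fun _ => 0) (length_facet z N), subdivide_zero]
    intro τ hlen hτmem hτ
    refine altCochain_eq_zero_of_card_lt 1 (ne_antipode_of_mem_map_flag hne hτmem hτ)
      (T := T) ?_ (by rwa [List.length_map, hlen])
    simp only [List.mem_map, forall_exists_index, and_imp, forall_apply_eq_imp_iff₂]
    exact fun x hx => hmem z x (hτmem x hx).1 (hτmem x hx).2
  have h := orthantSum_subdivide_altCochain hodd hne le_rfl
  rw [orthantSum_congr (g := fun _ => 0) hvanish, orthantSum_zero] at h
  exact zero_ne_one h

end Tucker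

section SignedSum

variable {E : Type*} [AddCommGroup E]

/-- The sum of the vectors `w i`, over the signed indices `(i, s)` of a list, with signs `s`. -/
def signedSum (w : ℕ → E) (x : List (ℕ × ℤˣ)) : E := (x.map fun p => p.2 • w p.1).sum

theorem signedSum_map_antipode (w : ℕ → E) (x : List (ℕ × ℤˣ)) :
    signedSum w (x.map antipode) = -signedSum w x := by
  simp [signedSum, antipode, Function.comp_def, Units.neg_smul, List.sum_neg]

theorem signedSum_facet (w : ℕ → E) (z : ℕ → ℤˣ) (k : ℕ) :
    signedSum w (facet z k) = ∑ j ∈ Finset.range k, z j • w j := by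
  induction k with
  | zero => rfl
  | succ k ih => rw [Finset.sum_range_succ_comm, ← ih]; rfl

end SignedSum

theorem norm_signedSum_sub_le {E : Type*} [SeminormedAddCommGroup E] {w : ℕ → E} {B : ℝ}
    (hw : ∀ j, ‖w j‖ ≤ B) {x y : List (ℕ × ℤˣ)} (h : x <+ y) :
    ‖signedSum w y - signedSum w x‖ ≤ ((y.length : ℝ) - x.length) * B := by
  have hterm (s : ℤˣ) (j : ℕ) : ‖s • w j‖ ≤ B := by
    rcases Int.units_eq_one_or s with rfl | rfl <;> simpa [Units.neg_smul] using hw j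
  induction h with
  | slnil => simp
  | @cons x y p _ ih =>
    have hsplit : signedSum w (p :: y) - signedSum w x =
        p.2 • w p.1 + (signedSum w y - signedSum w x) := by
      simp [signedSum, add_sub_assoc]
    rw [hsplit, List.length_cons]
    push_cast
    linarith [norm_add_le (p.2 • w p.1) (signedSum w y - signedSum w x), hterm p.2 p.1]
  | cons_cons p _ ih => simpa [signedSum] using ih

/-- The number of sign changes in the sequence `s 0, …, s N`. -/
def signChanges (s : ℕ → ℤˣ) (N : ℕ) : ℕ := #{j ∈ Finset.range N | s j ≠ s (j + 1)}

theorem signChanges_succ (s : ℕ → ℤˣ) (N : ℕ) :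
    signChanges s (N + 1) = signChanges s N + if s N ≠ s (N + 1) then 1 else 0 := by
  rw [signChanges, Finset.range_add_one, Finset.filter_insert]
  split_ifs <;> simp [signChanges]

section AltLength

/-- The length of the longest sublist with alternating signs. -/
def altLength (l : List ℤˣ) : ℕ := (l.destutter (· ≠ ·)).length

theorem altLength_map_neg (l : List ℤˣ) : altLength (l.map Neg.neg) = altLength l :=
  (congrArg List.length (List.map_destutter_ne l neg_injective)).symm.trans (List.length_map _)

theorem altLength_le_length (l : List ℤˣ) : altLength l ≤ l.length :=
  (List.destutter_sublist _ l).length_le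

theorem altLength_cons_cons (a b : ℤˣ) (l : List ℤˣ) :
    altLength (a :: b :: l) = altLength (b :: l) + if a ≠ b then 1 else 0 := by
  by_cases h : a = b <;> simp [altLength, List.destutter_cons', h]

theorem altLength_mono {l m : List ℤˣ} (h : l <+ m) : altLength l ≤ altLength m :=
  (List.isChain_destutter _ l).length_le_length_destutter_ne ((List.destutter_sublist _ l).trans h)

theorem altLength_cons_pos (a : ℤˣ) (l : List ℤˣ) : 0 < altLength (a :: l) :=
  altLength_mono (List.singleton_sublist.2 List.mem_cons_self : [a] <+ a :: l)

theorem altLength_lt_of_cons_sublist_cons {a b : ℤˣ} {l m : List ℤˣ} (hab : a ≠ b)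
    (h : a :: l <+ b :: m) : altLength (a :: l) < altLength (b :: m) := by
  have hm : a :: l <+ m := h.of_cons_of_ne hab
  have hlt := altLength_mono (hm.cons_cons b)
  rw [altLength_cons_cons, if_pos hab.symm] at hlt
  exact hlt

theorem altLength_facet (z : ℕ → ℤˣ) (N : ℕ) :
    altLength ((facet z (N + 1)).map Prod.snd) = signChanges z N + 1 := by
  induction N with
  | zero => rfl
  | succ N ih =>
    rw [facet, List.map_cons, facet, List.map_cons, altLength_cons_cons, ← List.map_cons, ← facet,
      ih, signChanges_succ, add_right_comm]
    simp only [ne_comm]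

end AltLength

section HobbyRice

theorem exists_odd_large_coordinate (n : ℕ) {c : ℝ} (hc : 0 ≤ c) :
    ∃ κ : (Fin n → ℝ) → ℕ × ℤˣ, ∀ v, c < ‖v‖ →
      κ (-v) = antipode (κ v) ∧ ∃ i : Fin n, (κ v).1 = i ∧ c < (κ v).2 • v i := by
  classical
  rcases isEmpty_or_nonempty (Fin n) with _ | _
  · refine ⟨fun _ => (0, 1), fun v hv => absurd hv ?_⟩
    rwa [Subsingleton.elim v 0, norm_zero, not_lt]
  let index (v : Fin n → ℝ) : Fin n := Classical.epsilon fun i => c < |v i|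
  refine ⟨fun v => (index v, if 0 < v (index v) then 1 else -1), fun v hv => ?_⟩
  have hlarge : c < |v (index v)| := by
    refine Classical.epsilon_spec (p := fun i => c < |v i|) ?_
    by_contra! h
    exact hv.not_ge ((pi_norm_le_iff_of_nonneg hc).2 h)
  have hindex : index (-v) = index v := by simp only [index, Pi.neg_apply, abs_neg]
  rcases lt_abs.1 hlarge with h | h
  · have hpos : 0 < v (index v) := hc.trans_lt h
    simp [antipode, hindex, hpos, hpos.le, Fin.val_inj, h]
  · have hneg : v (index v) < 0 := neg_pos.1 (hc.trans_lt h)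
    simp [antipode, hindex, hneg, hneg.not_gt, Fin.val_inj, h, Units.neg_smul]

/-- The labelling of the faces of the cross-polytope that proves the discrete Hobby–Rice theorem:
faces with few alternations are labelled by the number of alternations and the leading sign, the
others by the position and sign of a large coordinate of their signed sum, chosen by `κ`. -/
def splittingLabel {n : ℕ} (N : ℕ) (κ : (Fin n → ℝ) → ℕ × ℤˣ) (w : ℕ → Fin n → ℝ)
    (x : List (ℕ × ℤˣ)) : ℕ × ℤˣ :=
  if altLength (x.map Prod.snd) + n ≤ N then
    (altLength (x.map Prod.snd) - 1, (x.map Prod.snd).headD 1)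
  else (N - n + (κ (signedSum w x)).1, (κ (signedSum w x)).2)

variable {n N : ℕ} {κ : (Fin n → ℝ) → ℕ × ℤˣ} {w : ℕ → Fin n → ℝ} {x y : List (ℕ × ℤˣ)}

theorem splittingLabel_map_antipode (hx : x ≠ [])
    (hκ : N < altLength (x.map Prod.snd) + n →
      κ (-signedSum w x) = antipode (κ (signedSum w x))) :
    splittingLabel N κ w (x.map antipode) = antipode (splittingLabel N κ w x) := by
  have hsigns : (x.map antipode).map Prod.snd = (x.map Prod.snd).map Neg.neg := by
    simp only [List.map_map]
    rfl
  rw [splittingLabel, splittingLabel, hsigns, altLength_map_neg, signedSum_map_antipode]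
  split_ifs with h
  · obtain ⟨p, x, rfl⟩ := List.exists_cons_of_ne_nil hx
    rfl
  · rw [hκ (not_le.1 h)]
    rfl

theorem splittingLabel_fst_lt (hx : x ≠ [])
    (hκ : N < altLength (x.map Prod.snd) + n → n ≤ N ∧ (κ (signedSum w x)).1 < n) :
    (splittingLabel N κ w x).1 < N := by
  obtain ⟨p, x, rfl⟩ := List.exists_cons_of_ne_nil hx
  have hpos := altLength_cons_pos p.2 (x.map Prod.snd)
  rw [← List.map_cons] at hpos
  rw [splittingLabel]
  split_ifs with h
  · dsimp only
    omega
  · have := hκ (not_le.1 h)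
    dsimp only
    omega

theorem lt_altLength_of_splittingLabel_eq_antipode (hx : x ≠ []) (hxy : x <+ y)
    (h : splittingLabel N κ w x = antipode (splittingLabel N κ w y)) :
    N < altLength (x.map Prod.snd) + n ∧ κ (signedSum w x) = antipode (κ (signedSum w y)) := by
  obtain ⟨p, x, rfl⟩ := List.exists_cons_of_ne_nil hx
  obtain ⟨q, y, rfl⟩ := List.exists_cons_of_ne_nil (fun hy => hx (List.sublist_nil.1 (hy ▸ hxy)))
  have hx := altLength_cons_pos p.2 (x.map Prod.snd)
  have hsub := hxy.map Prod.snd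
  have hle := altLength_mono hsub
  simp only [splittingLabel, antipode, List.map_cons, List.headD_cons] at h hle hx hsub ⊢
  split_ifs at h with hax hay hay
  · simp only [Prod.mk.injEq] at h
    have hlt := altLength_lt_of_cons_sublist_cons (Int.units_ne_iff_eq_neg.2 h.2) hsub
    omega
  · simp only [Prod.mk.injEq] at h
    omega
  · simp only [Prod.mk.injEq] at h
    omega
  · simp only [Prod.mk.injEq, add_right_inj] at h
    exact ⟨not_le.1 hax, Prod.ext h.1 h.2⟩

theorem norm_signedSum_sub_le_of_lt_altLength {B : ℝ} (hw : ∀ j, ‖w j‖ ≤ B) {z : ℕ → ℤˣ}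
    (hxy : x <+ y) (hy : y <+ facet z (N + 1)) (hx : N < altLength (x.map Prod.snd) + n) :
    ‖signedSum w y - signedSum w x‖ ≤ n * B := by
  have hB : 0 ≤ B := (norm_nonneg _).trans (hw 0)
  have hlen : y.length ≤ x.length + n := by
    have halt := altLength_le_length (x.map Prod.snd)
    have hle := hy.length_le
    rw [List.length_map] at halt
    rw [length_facet] at hle
    omega
  have hcast : (y.length : ℝ) - x.length ≤ n := by
    rw [sub_le_iff_le_add']
    exact_mod_cast hlen
  exact (norm_signedSum_sub_le hw hxy).trans (mul_le_mul_of_nonneg_right hcast hB)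

theorem exists_norm_signedSum_facet_le (hn : n ≤ N) {B : ℝ} (hw : ∀ j, ‖w j‖ ≤ B) :
    ∃ z, N < altLength ((facet z (N + 1)).map Prod.snd) + n ∧
      ‖signedSum w (facet z (N + 1))‖ ≤ 2 * n * B := by
  by_contra! hlarge
  have hB : 0 ≤ B := (norm_nonneg _).trans (hw 0)
  have hface (z x) (hx : x <+ facet z (N + 1)) (h : N < altLength (x.map Prod.snd) + n) :
      n * B < ‖signedSum w x‖ := by
    have hfacet := hlarge z (h.trans_le (Nat.add_le_add_right (altLength_mono (hx.map Prod.snd)) n))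
    have := norm_sub_norm_le (signedSum w (facet z (N + 1))) (signedSum w x)
    linarith [norm_signedSum_sub_le_of_lt_altLength hw hx (List.Sublist.refl _) h]
  obtain ⟨κ, hκ⟩ := exists_odd_large_coordinate n (c := n * B) (by positivity)
  obtain ⟨z, x, y, hx, hxy, hy, hlabel⟩ := octahedral_tucker (N := N + 1) (T := Finset.range N)
    (l := splittingLabel N κ w) (by simp)
    (fun z x hx hxz => Finset.mem_range.2 <| splittingLabel_fst_lt hx fun h => by
      obtain ⟨i, hi, -⟩ := (hκ _ (hface z x hxz h)).2
      exact ⟨hn, hi ▸ i.isLt⟩)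
    (fun z x hx hxz => splittingLabel_map_antipode hx fun h => (hκ _ (hface z x hxz h)).1)
  obtain ⟨hax, hκxy⟩ := lt_altLength_of_splittingLabel_eq_antipode hx hxy hlabel
  have hay := hax.trans_le (Nat.add_le_add_right (altLength_mono (hxy.map Prod.snd)) n)
  obtain ⟨i, hix, hxi⟩ := (hκ _ (hface z x (hxy.trans hy) hax)).2
  obtain ⟨j, hjy, hyj⟩ := (hκ _ (hface z y hy hay)).2
  obtain rfl : i = j := Fin.val_injective (by rw [← hix, ← hjy, hκxy, antipode])
  rw [hκxy, antipode] at hxi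
  have hi := (norm_le_pi_norm (signedSum w y - signedSum w x) i).trans
    (norm_signedSum_sub_le_of_lt_altLength hw hxy hy hax)
  rw [Pi.sub_apply, Real.norm_eq_abs, abs_le] at hi
  rcases Int.units_eq_one_or (κ (signedSum w y)).2 with hs | hs <;>
    simp only [hs, neg_neg, one_smul, Units.neg_smul] at hxi hyj <;>
    nlinarith [mul_nonneg n.cast_nonneg hB]

theorem exists_signs_few_changes (n N : ℕ) {w : ℕ → Fin n → ℝ} {B : ℝ} (hw : ∀ j, ‖w j‖ ≤ B) :
    ∃ s : ℕ → ℤˣ, signChanges s N ≤ n ∧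
      ‖∑ j ∈ Finset.range (N + 1), s j • w j‖ ≤ 2 * n * B := by
  have hB : 0 ≤ B := (norm_nonneg _).trans (hw 0)
  rcases lt_or_ge N n with hN | hn
  · refine ⟨1, by simp [signChanges], (norm_sum_le _ _).trans ?_⟩
    calc ∑ j ∈ Finset.range (N + 1), ‖(1 : ℕ → ℤˣ) j • w j‖
        ≤ ∑ _ ∈ Finset.range (N + 1), B := Finset.sum_le_sum fun j _ => by simpa using hw j
      _ = (N + 1 : ℕ) * B := by simp
      _ ≤ 2 * n * B := by
        gcongr
        exact_mod_cast (show N + 1 ≤ 2 * n by omega)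
  · -- The signs `(-1) ^ j` exchange the changes of a sign vector and its repetitions.
    let w' (j : ℕ) : Fin n → ℝ := ((-1) ^ j : ℤˣ) • w j
    have hw' (j : ℕ) : ‖w' j‖ ≤ B := by
      rcases neg_one_pow_eq_or ℤˣ j with h | h <;>
        simpa only [w', h, one_smul, Units.neg_smul, norm_neg] using hw j
    obtain ⟨z, hz, hsum⟩ := exists_norm_signedSum_facet_le hn hw'
    refine ⟨fun j => z j * (-1) ^ j, ?_, ?_⟩
    · have hiff (j : ℕ) : z j * (-1) ^ j ≠ z (j + 1) * (-1) ^ (j + 1) ↔ ¬ z j ≠ z (j + 1) := by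
        rw [Int.units_ne_iff_eq_neg, pow_succ, mul_neg_one, mul_neg, neg_neg, mul_left_inj, not_not]
      have hcard := Finset.card_filter_add_card_filter_not (s := Finset.range N)
        (fun j => z j ≠ z (j + 1))
      rw [altLength_facet, signChanges] at hz
      rw [Finset.card_range] at hcard
      simp only [signChanges, hiff]
      omega
    · simpa only [signedSum_facet, w', smul_smul] using hsum

end HobbyRice

section SignPart

variable {A A' : Type*} [AddCommGroup A] [AddCommGroup A']

/-- The sum of those among the first `N` terms of the sequence `a` to which `s` gives the
sign `ε`. -/
def signPart (s : ℕ → ℤˣ) (ε : ℤˣ) (a : ℕ → A) (N : ℕ) : A :=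
  ∑ j ∈ Finset.range N, if s j = ε then a j else 0

theorem signPart_succ (s : ℕ → ℤˣ) (ε : ℤˣ) (a : ℕ → A) (N : ℕ) :
    signPart s ε a (N + 1) = signPart s ε a N + if s N = ε then a N else 0 :=
  Finset.sum_range_succ _ N

theorem map_signPart (φ : A →+ A') (s : ℕ → ℤˣ) (ε : ℤˣ) (a : ℕ → A) (N : ℕ) :
    φ (signPart s ε a N) = signPart s ε (fun j => φ (a j)) N := by
  simp only [signPart, map_sum, apply_ite φ, map_zero]

theorem signPart_add_signPart_neg (s : ℕ → ℤˣ) (ε : ℤˣ) (a : ℕ → A) (N : ℕ) :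
    signPart s ε a N + signPart s (-ε) a N = ∑ j ∈ Finset.range N, a j := by
  rw [signPart, signPart, ← Finset.sum_add_distrib]
  refine Finset.sum_congr rfl fun j _ => ?_
  by_cases h : s j = ε
  · rw [if_pos h, if_neg (Int.units_ne_iff_eq_neg.2 (by rw [neg_neg, h])), add_zero]
  · rw [if_neg h, if_pos (Int.units_ne_iff_eq_neg.1 h), zero_add]

theorem signPart_sub_signPart_neg (s : ℕ → ℤˣ) (ε : ℤˣ) (a : ℕ → A) (N : ℕ) :
    signPart s ε a N - signPart s (-ε) a N = ε • ∑ j ∈ Finset.range N, s j • a j := by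
  rw [signPart, signPart, ← Finset.sum_sub_distrib, Finset.smul_sum]
  refine Finset.sum_congr rfl fun j _ => ?_
  rw [smul_smul]
  by_cases h : s j = ε
  · rw [if_pos h, if_neg (Int.units_ne_iff_eq_neg.2 (by rw [neg_neg, h])), h, sub_zero,
      Int.units_mul_self, one_smul]
  · rw [if_neg h, if_pos (Int.units_ne_iff_eq_neg.1 h), Int.units_ne_iff_eq_neg.1 h, zero_sub,
      mul_neg, Int.units_mul_self, Units.neg_smul, one_smul]

theorem norm_map_sub_signPart_le {E : Type*} [SeminormedAddCommGroup E] [NormedSpace ℝ E]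
    (φ : A →+ E) {a : ℕ → A} {N : ℕ} {g : A} (ha : ∑ j ∈ Finset.range N, a j = g + g)
    {s : ℕ → ℤˣ} (ε : ℤˣ) {r : ℝ} (hr : ‖∑ j ∈ Finset.range N, s j • φ (a j)‖ ≤ 2 * r) :
    ‖φ (g - signPart s ε a N)‖ ≤ r := by
  have hsum := (signPart_add_signPart_neg s ε a N).trans ha
  have hdiff := signPart_sub_signPart_neg s ε (fun j => φ (a j)) N
  rw [← map_signPart, ← map_signPart, ← map_sub] at hdiff
  have hdouble : φ (g - signPart s ε a N) + φ (g - signPart s ε a N) =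
      -(ε • ∑ j ∈ Finset.range N, s j • φ (a j)) := by
    rw [← hdiff, ← map_add, ← map_neg, ← eq_sub_iff_add_eq'.2 hsum |>.symm]
    congr 1
    abel
  have hnorm : ‖φ (g - signPart s ε a N) + φ (g - signPart s ε a N)‖ ≤ 2 * r := by
    rw [hdouble, norm_neg]
    rcases Int.units_eq_one_or ε with rfl | rfl <;> simpa [Units.neg_smul] using hr
  rw [← two_smul ℝ, norm_smul, Real.norm_two] at hnorm
  linarith

end SignPart

section CoarselyGeodesic

variable {G : Type*} [AddCommGroup G] {f : G → ℝ} {D : ℝ}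

/-- Each `g` is reached from `0` by a sequence `p` along which `f` is, up to the additive error
`D`, the length of the time elapsed in a parametrization `t` with steps at most `1`. -/
def CoarselyGeodesic (f : G → ℝ) (D : ℝ) : Prop :=
  ∀ g, ∃ (N : ℕ) (p : ℕ → G) (t : ℕ → ℝ), p 0 = 0 ∧ p (N + 1) = g ∧ t 0 = 0 ∧ t (N + 1) = f g ∧
    (∀ j, t (j + 1) ≤ t j + 1) ∧ ∀ i j, i ≤ j → f (p j - p i) ≤ t j - t i + D

/-- Cutting the path `p` into runs of constant sign, each run with sign `ε` costs one error
term `D`. A run that is still open at time `N + 1` can be prolonged at no additional cost. -/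
theorem apply_signPart_add_le (hf : ∀ a b, f (a + b) ≤ f a + f b) {p : ℕ → G} {t : ℕ → ℝ}
    (hp : ∀ i j, i ≤ j → f (p j - p i) ≤ t j - t i + D) (s : ℕ → ℤˣ) (ε : ℤˣ) (N : ℕ) :
    ∀ M, N + 1 ≤ M →
      f (signPart s ε (fun j => p (j + 1) - p j) (N + 1) +
          if s N = ε then p M - p (N + 1) else 0) ≤
        signPart s ε (fun j => t (j + 1) - t j) (N + 1) +
          (if s N = ε then t M - t (N + 1) else 0) + (signChanges s N + 1) * D := by
  have hzero : f 0 ≤ D := by simpa using hp 0 0 le_rfl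
  have hD : 0 ≤ D := by linarith [hf 0 0, congrArg f (add_zero (0 : G))]
  induction N with
  | zero =>
    intro M _
    by_cases h : s 0 = ε
    · simpa [signPart, signChanges, h] using hp 0 M M.zero_le
    · simpa [signPart, signChanges, h] using hzero
  | succ N ih =>
    intro M hM
    have hM' : N + 1 ≤ M := N.succ.le_succ.trans hM
    rw [signPart_succ _ _ _ (N + 1), signPart_succ _ _ _ (N + 1), signChanges_succ]
    set u := signPart s ε (fun j => p (j + 1) - p j) (N + 1)
    have hclosed := ih (N + 1) le_rfl
    simp only [sub_self, ite_self, add_zero] at hclosed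
    by_cases hsucc : s (N + 1) = ε
    · have hcancel : p (N + 1 + 1) - p (N + 1) + (p M - p (N + 1 + 1)) = p M - p (N + 1) := by abel
      simp only [hsucc, if_true, add_assoc u, hcancel]
      by_cases hN : s N = ε
      · have hopen := ih M hM'
        simp only [hN, if_true, ne_eq, not_true_eq_false, if_false, add_zero] at hopen ⊢
        linarith
      · simp only [hN, ne_eq, not_false_eq_true, if_true]
        push_cast
        linarith [hf u (p M - p (N + 1)), hp (N + 1) M hM']
    · simp only [hsucc, if_false, add_zero]
      refine hclosed.trans ?_
      gcongr
      omega

theorem apply_signPart_le (hf : ∀ a b, f (a + b) ≤ f a + f b) {p : ℕ → G} {t : ℕ → ℝ}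
    (hp : ∀ i j, i ≤ j → f (p j - p i) ≤ t j - t i + D) (s : ℕ → ℤˣ) (ε : ℤˣ) (N : ℕ) :
    f (signPart s ε (fun j => p (j + 1) - p j) (N + 1)) ≤
      signPart s ε (fun j => t (j + 1) - t j) (N + 1) + (signChanges s N + 1) * D := by
  simpa using apply_signPart_add_le hf hp s ε N (N + 1) le_rfl

theorem CoarselyGeodesic.fg (h : CoarselyGeodesic f D) (hfin : ∀ r, {g | f g ≤ r}.Finite) :
    AddGroup.FG G := by
  refine (AddGroup.fg_iff).2 ⟨{g | f g ≤ 1 + D}, top_le_iff.1 fun g _ => ?_, hfin _⟩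
  obtain ⟨N, p, t, h0, rfl, -, -, ht, hp⟩ := h g
  generalize N + 1 = k
  induction k with
  | zero => exact h0 ▸ zero_mem _
  | succ k ih =>
    have hstep : f (p (k + 1) - p k) ≤ 1 + D := by linarith [ht k, hp k (k + 1) k.le_succ]
    rw [← sub_add_cancel (p (k + 1)) (p k)]
    exact add_mem (AddSubgroup.subset_closure hstep) ih

theorem exists_addMonoidHom_finite_norm_le (G : Type*) [AddCommGroup G] [AddGroup.FG G] :
    ∃ (n : ℕ) (φ : G →+ (Fin n → ℝ)), ∀ r, {g | ‖φ g‖ ≤ r}.Finite := by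
  obtain ⟨n, ι, _, q, hq, e, ⟨E⟩⟩ := AddCommGroup.equiv_free_prod_directSum_zmod G
  have (i : ι) : NeZero (q i ^ e i) := ⟨pow_ne_zero _ (hq i).ne_zero⟩
  have : Finite (DirectSum ι fun i => ZMod (q i ^ e i)) := by
    classical
    exact Finite.of_equiv _ (DirectSum.addEquivProd fun i => ZMod (q i ^ e i)).symm.toEquiv
  let φ : G →+ (Fin n → ℝ) :=
    { toFun := fun g i => (E g).1 i
      map_zero' := by ext; simp
      map_add' := fun g h => by ext; simp }
  refine ⟨n, φ, fun r => ?_⟩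
  have hinj : Function.Injective fun g => (((E g).1 : Fin n → ℤ), (E g).2) := fun g h hgh =>
    E.injective (Prod.ext (DFunLike.coe_injective (Prod.mk.inj hgh).1) (Prod.mk.inj hgh).2)
  have hbox : (Set.pi Set.univ fun _ : Fin n => Set.Icc (-⌊r⌋) ⌊r⌋).Finite :=
    Set.Finite.pi fun _ => Set.finite_Icc _ _
  refine ((hbox.prod Set.finite_univ).preimage hinj.injOn).subset
    fun g hg => ⟨fun i _ => ?_, trivial⟩
  have hi : |((E g).1 i : ℝ)| ≤ r := (norm_le_pi_norm (φ g) i).trans hg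
  exact abs_le.1 (Int.le_floor.2 (by rwa [Int.cast_abs]))

theorem CoarselyGeodesic.exists_le_half_apply_add_self (h : CoarselyGeodesic f D)
    (hf : ∀ a b, f (a + b) ≤ f a + f b) (hfin : ∀ r, {g | f g ≤ r}.Finite) :
    ∃ C, 0 ≤ C ∧ ∀ g, f g ≤ f (g + g) / 2 + C := by
  have := h.fg hfin
  obtain ⟨n, φ, hφ⟩ := exists_addMonoidHom_finite_norm_le G
  obtain ⟨B, hB⟩ := ((hfin (1 + D)).image fun g => ‖φ g‖).bddAbove
  obtain ⟨C, hC⟩ := ((hφ (n * B)).image f).bddAbove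
  refine ⟨(n + 1) * |D| + |C|, by positivity, fun g => ?_⟩
  obtain ⟨N, p, t, hp0, hpN, ht0, htN, ht, hp⟩ := h (g + g)
  have hstep (j : ℕ) : f (p (j + 1) - p j) ≤ 1 + D := by linarith [ht j, hp j (j + 1) j.le_succ]
  obtain ⟨s, hs, hsum⟩ := exists_signs_few_changes n N (w := fun j => φ (p (j + 1) - p j)) (B := B)
    fun j => hB (Set.mem_image_of_mem _ (hstep j))
  obtain ⟨ε, hε⟩ : ∃ ε, signPart s ε (fun j => t (j + 1) - t j) (N + 1) ≤ f (g + g) / 2 := by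
    have htotal := signPart_add_signPart_neg s 1 (fun j => t (j + 1) - t j) (N + 1)
    rw [Finset.sum_range_sub, htN, ht0] at htotal
    by_contra! hgt
    linarith [hgt 1, hgt (-1)]
  set u := signPart s ε (fun j => p (j + 1) - p j) (N + 1)
  have hpath : ∑ j ∈ Finset.range (N + 1), (p (j + 1) - p j) = g + g := by
    rw [Finset.sum_range_sub, hpN, hp0, sub_zero]
  have hremainder : f (g - u) ≤ C :=
    hC (Set.mem_image_of_mem f (norm_map_sub_signPart_le φ hpath ε (by linarith)))
  have hruns : (signChanges s N + 1) * D ≤ (n + 1) * |D| :=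
    (mul_le_mul_of_nonneg_left (le_abs_self D) (by positivity)).trans (by gcongr)
  calc f g = f (u + (g - u)) := by rw [add_sub_cancel]
    _ ≤ f u + f (g - u) := hf _ _
    _ ≤ f (g + g) / 2 + (signChanges s N + 1) * D + C := by
      linarith [apply_signPart_le hf hp s ε N]
    _ ≤ f (g + g) / 2 + ((n + 1) * |D| + |C|) := by linarith [le_abs_self C]

end CoarselyGeodesic

section OrbitDist

variable {X G : Type*} [PseudoMetricSpace X] [AddCommGroup G] [AddAction G X]

theorem finite_dist_vadd_le_of_properlyDiscontinuous [ProperSpace X] (x₀ : X)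
    (h : ∀ K : Set X, IsCompact K → {g : G | (((g +ᵥ ·) '' K) ∩ K).Nonempty}.Finite) (r : ℝ) :
    {g : G | dist x₀ (g +ᵥ x₀) ≤ r}.Finite := by
  refine (h _ (isCompact_closedBall x₀ r)).subset fun g hg => ?_
  have hr : 0 ≤ r := dist_nonneg.trans hg
  exact ⟨g +ᵥ x₀, Set.mem_image_of_mem _ (Metric.mem_closedBall_self hr),
    Metric.mem_closedBall'.2 hg⟩

variable [IsIsometricVAdd G X] {x₀ : X}

theorem dist_add_vadd_le (x₀ : X) (a b : G) :
    dist x₀ ((a + b) +ᵥ x₀) ≤ dist x₀ (a +ᵥ x₀) + dist x₀ (b +ᵥ x₀) := by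
  have h := dist_triangle x₀ (a +ᵥ x₀) (a +ᵥ b +ᵥ x₀)
  rwa [dist_vadd, vadd_vadd] at h

theorem dist_sub_vadd (x₀ : X) (a b : G) :
    dist x₀ ((b - a) +ᵥ x₀) = dist (a +ᵥ x₀) (b +ᵥ x₀) := by
  rw [← dist_vadd a, vadd_vadd, add_sub_cancel]

theorem coarselyGeodesic_dist_vadd
    (hgeo : ∀ x y : X, ∃ γ : ℝ → X, γ 0 = x ∧ γ (dist x y) = y ∧
      ∀ s ∈ Set.Icc (0 : ℝ) (dist x y), ∀ t ∈ Set.Icc (0 : ℝ) (dist x y),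
        dist (γ s) (γ t) = |s - t|)
    {R : ℝ} (hR : ∀ y, ∃ g : G, dist y (g +ᵥ x₀) ≤ R) :
    CoarselyGeodesic (fun g : G => dist x₀ (g +ᵥ x₀)) (2 * R) := by
  intro g
  obtain ⟨γ, hγ0, hγL, hγ⟩ := hgeo x₀ (g +ᵥ x₀)
  choose q hq using fun s => hR (γ s)
  set L := dist x₀ (g +ᵥ x₀)
  have hR0 : 0 ≤ R := dist_nonneg.trans (hq 0)
  let t (j : ℕ) : ℝ := min j L
  have ht (j : ℕ) : t j ∈ Set.Icc 0 L := ⟨le_min j.cast_nonneg dist_nonneg, min_le_right _ _⟩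
  have ht0 : t 0 = 0 := by simp [t, L]
  obtain ⟨N, hN⟩ : ∃ N : ℕ, t (N + 1) = L := by
    obtain ⟨N, hN⟩ := exists_nat_ge L
    exact ⟨N, min_eq_right (by push_cast; linarith)⟩
  let p (j : ℕ) : G := if j = 0 then 0 else if j = N + 1 then g else q (t j)
  have hp (j : ℕ) : dist (γ (t j)) (p j +ᵥ x₀) ≤ R := by
    simp only [p]
    split_ifs with h0 hend
    · rwa [h0, ht0, hγ0, zero_vadd, dist_self]
    · rwa [hend, hN, hγL, dist_self]
    · exact hq _
  refine ⟨N, p, t, if_pos rfl, by simp [p], ht0, hN, fun j => ?_, fun i j hij => ?_⟩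
  · rw [← min_add_add_right]
    exact min_le_min (by push_cast; rfl) (by linarith)
  · have htij : t i ≤ t j := min_le_min_right L (Nat.cast_le.2 hij)
    have hγij := hγ _ (ht i) _ (ht j)
    rw [abs_sub_comm, abs_of_nonneg (sub_nonneg.2 htij)] at hγij
    have hpi := hp i
    rw [dist_comm] at hpi
    dsimp only
    rw [dist_sub_vadd]
    linarith [dist_triangle4 (p i +ᵥ x₀) (γ (t i)) (γ (t j)) (p j +ᵥ x₀), hp j]

theorem exists_dist_vadd_le_of_cocompact (x₀ : X)
    (h : ∃ K : Set X, IsCompact K ∧ ∀ x, ∃ g : G, g +ᵥ x ∈ K) :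
    ∃ R, ∀ y, ∃ g : G, dist y (g +ᵥ x₀) ≤ R := by
  obtain ⟨K, hK, hcover⟩ := h
  obtain ⟨R, hR⟩ := hK.isBounded.subset_closedBall x₀
  refine ⟨R, fun y => ?_⟩
  obtain ⟨g, hg⟩ := hcover y
  refine ⟨-g, ?_⟩
  rw [← dist_vadd g, vadd_neg_vadd]
  exact hR hg

theorem dist_le_half_dist_sq_add_const_general
    (hgeo : ∀ x y : X, ∃ γ : ℝ → X, γ 0 = x ∧ γ (dist x y) = y ∧
      ∀ s ∈ Set.Icc (0 : ℝ) (dist x y), ∀ t ∈ Set.Icc (0 : ℝ) (dist x y),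
        dist (γ s) (γ t) = |s - t|)
    (hcobounded : ∃ R, ∀ y, ∃ g : G, dist y (g +ᵥ x₀) ≤ R)
    (hfin : ∀ r, {g : G | dist x₀ (g +ᵥ x₀) ≤ r}.Finite) :
    ∃ C : ℝ, 0 ≤ C ∧ ∀ g : G, dist x₀ (g +ᵥ x₀) ≤ dist x₀ ((g + g) +ᵥ x₀) / 2 + C := by
  obtain ⟨R, hR⟩ := hcobounded
  exact (coarselyGeodesic_dist_vadd hgeo hR).exists_le_half_apply_add_self
    (dist_add_vadd_le x₀) hfin

end OrbitDist

/-- Key lemma: if `ℤⁿ` acts cocompactly and properly discontinuously by isometries on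
a proper geodesic metric space `X`, with a continuous equivariant map `F : X → ℝⁿ`,
then for a fixed `x₀ ∈ X` there is `C ≥ 0` with
`d(x₀, g x₀) ≤ d(x₀, g² x₀)/2 + C` for all `g`. -/
theorem dist_le_half_dist_sq_add_const
    {X : Type*} [MetricSpace X] [ProperSpace X]
    (hgeo : ∀ x y : X, ∃ γ : ℝ → X, γ 0 = x ∧ γ (dist x y) = y ∧
      ∀ s ∈ Set.Icc (0 : ℝ) (dist x y), ∀ t ∈ Set.Icc (0 : ℝ) (dist x y),
        dist (γ s) (γ t) = |s - t|)
    (n : ℕ) [AddAction (Fin n → ℤ) X]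
    (hisom : ∀ (g : Fin n → ℤ) (a b : X), dist (g +ᵥ a) (g +ᵥ b) = dist a b)
    (hcocompact : ∃ K : Set X, IsCompact K ∧ ∀ x : X, ∃ g : Fin n → ℤ, g +ᵥ x ∈ K)
    (hpd : ∀ K : Set X, IsCompact K →
      {g : Fin n → ℤ | (((g +ᵥ ·) '' K) ∩ K).Nonempty}.Finite)
    (F : X → EuclideanSpace ℝ (Fin n)) (hF : Continuous F)
    (hequiv : ∀ (g : Fin n → ℤ) (x : X),
      F (g +ᵥ x) = F x + (EuclideanSpace.equiv (Fin n) ℝ).symm (fun i => (g i : ℝ)))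
    (x₀ : X) :
    ∃ C : ℝ, 0 ≤ C ∧ ∀ g : Fin n → ℤ,
      dist x₀ (g +ᵥ x₀) ≤ dist x₀ ((g + g) +ᵥ x₀) / 2 + C := by
  have : IsIsometricVAdd (Fin n → ℤ) X := ⟨fun g => Isometry.of_dist_eq (hisom g)⟩
  exact dist_le_half_dist_sq_add_const_general hgeo (exists_dist_vadd_le_of_cocompact x₀ hcocompact)
    (finite_dist_vadd_le_of_properlyDiscontinuous x₀ hpd)
end
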